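/- arXiv:1911.02820 — 2 statements merged into one kernel-verified Lean document; each statement's English description precedes it below -/
import Mathlib

section
/- Let c ∈ (0, √2), let c_n ∈ (0, √2) with c_n → c, and let ψ_n be nontrivial finite energy solutions of the Gross–Pitaevskii traveling wave equation with speed c_n on ℝ³, normalized so that ψ_n(x) → 1 as |x| → ∞, with I^{c_n}(ψ_n) uniformly bounded in n. If the energies satisfy E(ψ_n) → +∞, then for every r ∈ (c/√2, 1) the Lebesgue measure of S_n^r = {x ∈ ℝ³ : |ψ_n(x)| < r} tends to +∞ as n → ∞. -/
/-!
Fix `q` with `c/√2 < q < r`. The point is the estimate (`mom_le`)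

  `P(ψ) ≤ E(ψ) / (√2 q) + K(|S^r|)`,

with `K(M)` (`errB`) depending only on `q`, `r` and `M`. Since `c_n / (√2 q) ≤ θ < 1` for large
`n`, it gives `(1 - θ) E(ψ_n) ≤ I^{c_n}(ψ_n) + 2 K(|S_n^r|)`, so the measures cannot stay bounded,
even along a subsequence, when the energies blow up (`energy_le`).

To prove the estimate, let `J = Im (conj ψ ∇ψ)` be the current and `ω = G(|ψ|²) J` a regularized
phase gradient, where `G(s) = 1/s` for `s ≥ q²`; thus `ω` is the differential of the phase of `ψ`
where `|ψ| > q`. Outside a large ball `ψ` is close to `1`, so `ω = dF` there for a function `F`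
vanishing at infinity, and `ω - dF` is compactly supported. The momentum density equals
`(ω₁ - J₁)/2 - (ω - dF)₁/2` plus an exact term `∂₁H/2` with `H → 0` at infinity.

* Where `|ψ| ≥ q` one has `|ω₁ - J₁|/2 ≤ |1 - |ψ|²| |∂₁ψ| / (2q)`, at most the energy density
  divided by `√2 q`; the remaining region lies in `S^r`, where the term is bounded
  (`half_abs_om_sub_le`).
* Let `m(y)` be the integral of `(ω - dF)₁` along the longitudinal line through `y`. The curl of
  `ω` contains no second derivatives of `ψ`, is bounded, and is supported in `{|ψ| ≤ q}`
  (`curl_om`). Because `∂_j m` is the line integral of the curl, the Sobolev inequality on `ℝ²`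
  bounds `‖m‖_{L²}` by a multiple of `|S^r|` (`lintegral_lineInt_sq_le`).
* On lines staying in `{|ψ| > q}`, `m(y)` is an integral multiple of `2π`
  (`lineInt_quantized`), so `|m| ≤ m²`. Every other line spends a length at least `(r - q)/45` in
  `S^r` (`lineLen_ge`), so these lines form a set of measure at most `45 |S^r| / (r - q)`, and on
  it `|m| ≤ 1 + m²`. Together this bounds `‖m‖_{L¹}` in terms of `|S^r|`
  (`lintegral_lineInt_le`).

The constants are uniform because every solution with `c² ≤ 2` and `ψ → 1` at infinity satisfies
`|ψ|² ≤ 3/2`, by the maximum principle (`norm_sq_le`), and `|∇ψ| ≤ 45`, by the Bernstein method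
(`grad_bound`).
-/


open MeasureTheory Filter Complex Metric Topology

noncomputable section

abbrev Ed (d : ℕ) := EuclideanSpace ℝ (Fin d)

/-- Partial derivative of `ψ` in the `i`-th coordinate direction. -/
def pd {d : ℕ} (ψ : Ed d → ℂ) (i : Fin d) (x : Ed d) : ℂ :=
  fderiv ℝ ψ x (EuclideanSpace.single i 1)

/-- Laplacian of `ψ`. -/
def lap {d : ℕ} (ψ : Ed d → ℂ) (x : Ed d) : ℂ :=
  ∑ i : Fin d, fderiv ℝ (fun y => fderiv ℝ ψ y (EuclideanSpace.single i 1)) x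
      (EuclideanSpace.single i 1)

/-- The Gross–Pitaevskii traveling wave equation with speed `c` on `ℝ^d`:
`ic ∂_{x₁}ψ + Δψ + (1 - |ψ|²)ψ = 0`. -/
def GPeq {d : ℕ} [NeZero d] (c : ℝ) (ψ : Ed d → ℂ) : Prop :=
  ∀ x, Complex.I * (c : ℂ) * pd ψ 0 x + lap ψ x + (1 - (‖ψ x‖ : ℂ) ^ 2) * ψ x = 0

/-- `|∇ψ|²`. -/
def gradSq {d : ℕ} (ψ : Ed d → ℂ) (x : Ed d) : ℝ := ∑ i : Fin d, ‖pd ψ i x‖ ^ 2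

/-- Energy density `(1/2)|∇ψ|² + (1/4)(1 - |ψ|²)²`. -/
def eDen {d : ℕ} (ψ : Ed d → ℂ) (x : Ed d) : ℝ :=
  1 / 2 * gradSq ψ x + 1 / 4 * (1 - ‖ψ x‖ ^ 2) ^ 2

/-- Energy `E(ψ)`. -/
def energy {d : ℕ} (ψ : Ed d → ℂ) : ℝ := ∫ x, eDen ψ x

/-- Finite energy. -/
def FiniteEnergy {d : ℕ} (ψ : Ed d → ℂ) : Prop := Integrable (eDen ψ)

/-- Momentum `P(ψ) = -∫ ∂_{x₁}(Im ψ)(Re ψ - 1)`. -/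
def mom {d : ℕ} [NeZero d] (ψ : Ed d → ℂ) : ℝ :=
  -∫ x, (pd ψ 0 x).im * ((ψ x).re - 1)

/-- Lagrangian `I^c(ψ) = E(ψ) - c P(ψ)`. -/
def lagr {d : ℕ} [NeZero d] (c : ℝ) (ψ : Ed d → ℂ) : ℝ := energy ψ - c * mom ψ

/-- `ψ` is not a constant of modulus 1. -/
def Nontriv {d : ℕ} (ψ : Ed d → ℂ) : Prop := ¬∃ z : ℂ, ‖z‖ = 1 ∧ ψ = fun _ => z

/-- The quadratic form `Q` of the second variation of `I^c` at `ψ`: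
`Q(φ) = ∫ |∇φ|² - c⟨φ, i∂₁φ⟩ - (1-|ψ|²)|φ|² + 2⟨φ,ψ⟩²` with `⟨z₁,z₂⟩ = Re (z₁ conj z₂)`. -/
def Qform {d : ℕ} [NeZero d] (c : ℝ) (ψ φ : Ed d → ℂ) : ℝ :=
  ∫ x, (gradSq φ x - c * (φ x * (starRingEnd ℂ) (Complex.I * pd φ 0 x)).re
    - (1 - ‖ψ x‖ ^ 2) * ‖φ x‖ ^ 2 + 2 * ((φ x * (starRingEnd ℂ) (ψ x)).re) ^ 2)

/-- The Morse index of `ψ` is at most `m`: every subspace of smooth compactly supported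
functions on which `Q` is negative definite has dimension at most `m`. -/
def MorseIndexLE {d : ℕ} [NeZero d] (c : ℝ) (ψ : Ed d → ℂ) (m : ℕ) : Prop :=
  ∀ Y : Submodule ℝ (Ed d → ℂ),
    (∀ φ ∈ Y, ContDiff ℝ (⊤ : ℕ∞) φ ∧ HasCompactSupport φ) →
    (∀ φ ∈ Y, φ ≠ 0 → Qform c ψ φ < 0) → Module.rank ℝ Y ≤ m

/-- `C^k_loc` convergence: uniform convergence of all iterated derivatives on every
compact set. -/
def LocCk {d : ℕ} (ψn : ℕ → Ed d → ℂ) (ψ : Ed d → ℂ) : Prop :=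
  ∀ (k : ℕ) (K : Set (Ed d)), IsCompact K →
    TendstoUniformlyOn (fun n => iteratedFDeriv ℝ k (ψn n)) (iteratedFDeriv ℝ k ψ) atTop K

/-- `|∇f|²` for a real-valued function. -/
def gradSqR {d : ℕ} (f : Ed d → ℝ) (x : Ed d) : ℝ :=
  ∑ i : Fin d, (fderiv ℝ f x (EuclideanSpace.single i 1)) ^ 2

/-- The set where `|ψ| < r`. -/
def Sset {d : ℕ} (ψ : Ed d → ℂ) (r : ℝ) : Set (Ed d) := {x | ‖ψ x‖ < r}

section Aux

open scoped ContDiff ENNReal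

/-! ### Differentiating along coordinate lines; the maximum principle `|ψ|² ≤ 3/2` -/

/-- The `k`-th coordinate vector. -/
abbrev bv {d : ℕ} (k : Fin d) : Ed d := EuclideanSpace.single k 1

lemma contDiff_pd {d : ℕ} {ψ : Ed d → ℂ} (h : ContDiff ℝ (⊤ : ℕ∞) ψ) (i : Fin d) :
    ContDiff ℝ (⊤ : ℕ∞) (pd ψ i) := by
  have h1 : ContDiff ℝ (⊤ : ℕ∞) (fderiv ℝ ψ) := h.fderiv_right (by norm_cast)
  exact h1.clm_apply contDiff_const

lemma pd_comm {d : ℕ} {ψ : Ed d → ℂ} (h : ContDiff ℝ (⊤ : ℕ∞) ψ) (i j : Fin d) (x : Ed d) :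
    pd (pd ψ i) j x = pd (pd ψ j) i x := by
  have h1 : ContDiff ℝ (⊤ : ℕ∞) (fderiv ℝ ψ) := h.fderiv_right (by norm_cast)
  have hd : DifferentiableAt ℝ (fderiv ℝ ψ) x := (h1.differentiable (by simp)) x
  have key : ∀ i j : Fin d, pd (pd ψ i) j x = fderiv ℝ (fderiv ℝ ψ) x (bv j) (bv i) := by
    intro i j
    have := (hd.hasFDerivAt.clm_apply (hasFDerivAt_const (bv i) x)).fderiv
    unfold pd
    rw [this]
    simp
  rw [key, key]
  have hs : IsSymmSndFDerivAt ℝ ψ x := by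
    apply ContDiffAt.isSymmSndFDerivAt (n := ((⊤ : ℕ∞) : WithTop ℕ∞)) h.contDiffAt
    simp only [minSmoothness_of_isRCLikeNormedField]
    exact WithTop.coe_le_coe.2 (le_top : (2 : ℕ∞) ≤ ⊤)
  exact hs _ _

lemma hasDerivAt_line {d : ℕ} {f : Ed d → ℂ} (hf : Differentiable ℝ f) (p : Ed d) (k : Fin d)
    (t : ℝ) : HasDerivAt (fun t : ℝ => f (p + t • bv k)) (pd f k (p + t • bv k)) t := by
  have h1 : HasDerivAt (fun t : ℝ => p + t • bv k) (bv k) t := by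
    simpa using ((hasDerivAt_id t).smul_const (bv k)).const_add p
  exact (hf _).hasFDerivAt.comp_hasDerivAt t h1

/-- Second-order necessary condition at a local maximum. -/
lemma second_deriv_nonpos {h h' : ℝ → ℝ} {h'' : ℝ} (hl : IsLocalMax h 0)
    (h1 : ∀ t, HasDerivAt h (h' t) t) (h2 : HasDerivAt h' h'' 0) : h'' ≤ 0 := by
  by_contra hc
  push Not at hc
  have e1 : deriv h = h' := funext fun t => (h1 t).deriv
  have hmin : IsLocalMin h 0 := by
    apply isLocalMin_of_deriv_deriv_pos
    · rw [e1, h2.deriv]; exact hc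
    · exact hl.deriv_eq_zero
    · exact (h1 0).continuousAt
  have hconst : h =ᶠ[𝓝 0] fun _ => h 0 := by
    filter_upwards [hl, hmin] with t a b using le_antisymm a b
  have h3 : deriv h =ᶠ[𝓝 0] deriv (fun _ => h 0) := hconst.deriv
  have h4 : h' =ᶠ[𝓝 0] fun _ => 0 := by
    rw [e1] at h3
    filter_upwards [h3] with t a
    simpa using a
  have h5 := h4.deriv_eq
  rw [h2.deriv] at h5
  simp at h5
  linarith

lemma lap_eq {d : ℕ} [NeZero d] {c : ℝ} {ψ : Ed d → ℂ} (hg : GPeq c ψ) (x : Ed d) :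
    ∑ k, pd (pd ψ k) k x =
      -(Complex.I * (c : ℂ) * pd ψ 0 x) - ((1 - ‖ψ x‖ ^ 2 : ℝ) : ℂ) * ψ x := by
  have h := hg x
  have h2 : lap ψ x = ∑ k, pd (pd ψ k) k x := rfl
  rw [h2] at h
  push_cast
  linear_combination h

/-- The equation solved by `∂_j ψ`, obtained by differentiating the equation for `ψ`. -/
lemma lap_pd_eq {d : ℕ} [NeZero d] {c : ℝ} {ψ : Ed d → ℂ} (h : ContDiff ℝ (⊤ : ℕ∞) ψ)
    (hg : GPeq c ψ) (j : Fin d) (x : Ed d) :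
    ∑ k, pd (pd (pd ψ j) k) k x =
      -(Complex.I * (c : ℂ) * pd (pd ψ j) 0 x) - ((1 - ‖ψ x‖ ^ 2 : ℝ) : ℂ) * pd ψ j x
        + ((2 * inner ℝ (ψ x) (pd ψ j x) : ℝ) : ℂ) * ψ x := by
  have hdiff : ∀ {f : Ed d → ℂ}, ContDiff ℝ (⊤ : ℕ∞) f → Differentiable ℝ f :=
    fun hf => hf.differentiable (by simp)
  have hL : HasDerivAt (fun t : ℝ => ∑ k, pd (pd ψ k) k (x + t • bv j))
      (∑ k, pd (pd (pd ψ k) k) j (x + (0 : ℝ) • bv j)) 0 := by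
    apply HasDerivAt.fun_sum
    intro k _
    exact hasDerivAt_line (hdiff (contDiff_pd (contDiff_pd h k) k)) x j 0
  have hψ := hasDerivAt_line (hdiff h) x j 0
  have hψ0 := hasDerivAt_line (hdiff (contDiff_pd h 0)) x j 0
  have hR := ((hψ0.const_mul (Complex.I * (c : ℂ))).neg).sub
    (((hψ.norm_sq.const_sub 1).ofReal_comp).mul hψ)
  have e : (fun t : ℝ => ∑ k, pd (pd ψ k) k (x + t • bv j)) = _ :=
    funext fun t => lap_eq hg (x + t • bv j)
  rw [e] at hL
  have hu := hL.unique hR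
  simp only [zero_smul, add_zero] at hu
  have e2 : ∀ k, pd (pd (pd ψ k) k) j x = pd (pd (pd ψ j) k) k x := by
    intro k
    rw [pd_comm (contDiff_pd h k) k j x]
    have : pd (pd ψ k) j = pd (pd ψ j) k := funext fun y => pd_comm h k j y
    rw [this]
  simp only [e2] at hu
  rw [hu, pd_comm h 0 j x]
  push_cast
  ring

/-- A uniform bound on `|ψ|`. At a maximum point of `|ψ|²` exceeding `1` (one exists because
`ψ → 1` at infinity) one has `Δ|ψ|² ≤ 0`; the first order term of the equation is absorbed by
completing the square against `|∂₁ψ|²`, which leaves `|ψ|² ≤ 1 + c²/4`. -/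
lemma norm_sq_le {d : ℕ} [NeZero d] {c : ℝ} (hc : c ^ 2 ≤ 2) {ψ : Ed d → ℂ}
    (h : ContDiff ℝ (⊤ : ℕ∞) ψ) (hg : GPeq c ψ)
    (hlim : Tendsto ψ (cocompact (Ed d)) (𝓝 1)) (x : Ed d) : ‖ψ x‖ ^ 2 ≤ 3 / 2 := by
  have hdiff : ∀ {f : Ed d → ℂ}, ContDiff ℝ (⊤ : ℕ∞) f → Differentiable ℝ f :=
    fun hf => hf.differentiable (by simp)
  by_contra hx
  push Not at hx
  have hcont : Continuous fun y => ‖ψ y‖ ^ 2 := (h.continuous.norm).pow 2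
  have hlim2 : Tendsto (fun y => ‖ψ y‖ ^ 2) (cocompact (Ed d)) (𝓝 1) := by
    simpa using (hlim.norm).pow 2
  obtain ⟨p, hp⟩ := hcont.exists_forall_ge' x
    ((hlim2.eventually (gt_mem_nhds (show (1 : ℝ) < 3 / 2 by norm_num))).mono
      fun y hy => (hy.trans hx).le)
  have hpx : 3 / 2 < ‖ψ p‖ ^ 2 := hx.trans_le (hp x)
  have hk : ∀ k : Fin d, 2 * (‖pd ψ k p‖ ^ 2 + inner ℝ (ψ p) (pd (pd ψ k) k p)) ≤ 0 := by
    intro k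
    have a0 := hasDerivAt_line (hdiff h) p k
    have a1 := hasDerivAt_line (hdiff (contDiff_pd h k)) p k
    refine second_deriv_nonpos (h := fun t => ‖ψ (p + t • bv k)‖ ^ 2) ?_
      (fun t => (a0 t).norm_sq) ?_
    · exact Eventually.of_forall fun t => by simpa using hp (p + t • bv k)
    · have := ((a0 0).inner ℝ (a1 0)).const_mul 2
      simp only [zero_smul, add_zero] at this
      refine this.congr_deriv ?_
      rw [real_inner_self_eq_norm_sq]; ring
  have hs : ∑ k, ‖pd ψ k p‖ ^ 2 + inner ℝ (ψ p) (∑ k, pd (pd ψ k) k p) ≤ 0 := by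
    rw [inner_sum, ← Finset.sum_add_distrib]
    apply Finset.sum_nonpos
    intro k _
    linarith [hk k]
  rw [lap_eq hg] at hs
  have h0 : ‖pd ψ 0 p‖ ^ 2 ≤ ∑ k, ‖pd ψ k p‖ ^ 2 :=
    Finset.single_le_sum (f := fun k => ‖pd ψ k p‖ ^ 2) (fun k _ => sq_nonneg _) (Finset.mem_univ 0)
  have n1 : ‖ψ p‖ ^ 2 = (ψ p).re ^ 2 + (ψ p).im ^ 2 := by
    rw [← Complex.normSq_eq_norm_sq, Complex.normSq_apply]; ring
  have n2 : ‖pd ψ 0 p‖ ^ 2 = (pd ψ 0 p).re ^ 2 + (pd ψ 0 p).im ^ 2 := by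
    rw [← Complex.normSq_eq_norm_sq, Complex.normSq_apply]; ring
  simp only [Complex.inner] at hs
  simp at hs
  set s := ∑ k, ‖pd ψ k p‖ ^ 2
  have e1 : ((‖ψ p‖:ℂ)^2) = ((‖ψ p‖^2 : ℝ) : ℂ) := by push_cast; rfl
  simp only [e1, Complex.ofReal_re, Complex.ofReal_im] at hs
  set u := ‖ψ p‖ ^ 2
  set v := ‖pd ψ 0 p‖ ^ 2
  set a := (ψ p).re
  set b := (ψ p).im
  set A := (pd ψ 0 p).re
  set B := (pd ψ 0 p).im
  have key : 0 < v + (a * (c * B - (1 - u) * a) + b * (-(c * A) - (1 - u) * b)) := by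
    have : v + (a * (c * B - (1 - u) * a) + b * (-(c * A) - (1 - u) * b)) =
      (A - c / 2 * b) ^ 2 + (B + c / 2 * a) ^ 2 + u * (u - 1 - c ^ 2 / 4) := by
      rw [n2]
      linear_combination ((1-u) + c^2/4) * n1
    rw [this]
    have : 0 < u * (u - 1 - c ^ 2 / 4) := by
      apply mul_pos <;> linarith
    positivity
  nlinarith [hs]

/-! ### Bernstein gradient estimate -/

lemma nsq (z : ℂ) : ‖z‖ ^ 2 = z.re ^ 2 + z.im ^ 2 := by
  rw [← Complex.normSq_eq_norm_sq, Complex.normSq_apply]; ring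

lemma inner_re_im (z w : ℂ) : inner ℝ z w = z.re * w.re + z.im * w.im := by
  rw [Complex.inner]; simp; ring

/-- Algebraic lower bound for `Re ⟨∂_jψ, Δ∂_jψ⟩` in the Bernstein argument, with `A = ∂_jψ`,
`A0 = ∂₁∂_jψ`, `z = ψ`. -/
lemma bern_A {c u : ℝ} (hc : c ^ 2 ≤ 2) (hu : 0 ≤ u) (A A0 z : ℂ) :
    -‖A0‖ ^ 2 - 4 * ‖A‖ ^ 2 ≤ 2 * inner ℝ A (-(Complex.I * (c : ℂ) * A0) -
      ((1 - u : ℝ) : ℂ) * A + ((2 * inner ℝ z A : ℝ) : ℂ) * z) := by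
  simp only [inner_re_im, nsq]
  simp
  set a := A.re
  set b := A.im
  set p := A0.re
  set q := A0.im
  have h1 : 0 ≤ (p - c * b) ^ 2 + (q + c * a) ^ 2 := by positivity
  have h2 : 0 ≤ (z.re * a + z.im * b) ^ 2 := sq_nonneg _
  have h3 : 0 ≤ u * (a ^ 2 + b ^ 2) := by positivity
  have h4 : 0 ≤ (2 - c ^ 2) * (a ^ 2 + b ^ 2) := by
    apply mul_nonneg <;> [linarith; positivity]
  nlinarith

/-- Algebraic lower bound for `Re ⟨ψ, Δψ⟩` in the Bernstein argument, with `z = ψ`,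
`z0 = ∂₁ψ`. -/
lemma bern_B {c : ℝ} (hc : c ^ 2 ≤ 2) (z z0 : ℂ) (hu : ‖z‖ ^ 2 ≤ 3 / 2) :
    -‖z0‖ ^ 2 - 6 ≤ 2 * inner ℝ z (-(Complex.I * (c : ℂ) * z0) -
      ((1 - ‖z‖ ^ 2 : ℝ) : ℂ) * z) := by
  have hu0 : 0 ≤ ‖z‖ ^ 2 := sq_nonneg _
  set u := ‖z‖ ^ 2 with hu'
  rw [nsq] at hu'
  simp only [inner_re_im, nsq]
  simp
  set a := z.re
  set b := z.im
  set p := z0.re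
  set q := z0.im
  have h1 : 0 ≤ (p - c * b) ^ 2 + (q + c * a) ^ 2 := by positivity
  have h4 : 0 ≤ (2 - c ^ 2) * (a ^ 2 + b ^ 2) := by
    apply mul_nonneg <;> [linarith; positivity]
  nlinarith

/-- Young inequality for the cross term `∇η² · ∇|∇ψ|²` produced by the cutoff. -/
lemma inner_sum_le {ι : Type*} (s : Finset ι) (A B : ι → ℂ) (η l : ℝ) (hl : |l| ≤ 1) :
    -η ^ 2 * ∑ j ∈ s, ‖B j‖ ^ 2 - 64 * ∑ j ∈ s, ‖A j‖ ^ 2 ≤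
      -16 * η * l * ∑ j ∈ s, inner ℝ (A j) (B j) := by
  rw [Finset.mul_sum, Finset.mul_sum, Finset.mul_sum, ← Finset.sum_sub_distrib]
  apply Finset.sum_le_sum
  intro j _
  rw [inner_re_im, nsq, nsq]
  set a := (A j).re
  set b := (A j).im
  set p := (B j).re
  set q := (B j).im
  have h1 : 0 ≤ (η * p - 8 * l * a) ^ 2 + (η * q - 8 * l * b) ^ 2 := by positivity
  have h2 : l ^ 2 ≤ 1 := (sq_le_one_iff_abs_le_one l).2 hl
  have h4 : 0 ≤ (1 - l ^ 2) * (a ^ 2 + b ^ 2) := by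
    apply mul_nonneg <;> [linarith; positivity]
  nlinarith

/-- Interior gradient bound by the Bernstein method: the maximum over the unit ball around `x0` of
`η² |∇ψ|² + 209 |ψ|²`, with cutoff `η = 1 - |x - x0|²`, either lies on the boundary, where only
`|ψ|²` contributes, or is an interior critical point, where the Laplacian is nonpositive. -/
lemma grad_bound {c : ℝ} (hc : c ^ 2 ≤ 2) {ψ : Ed 3 → ℂ}
    (h : ContDiff ℝ (⊤ : ℕ∞) ψ) (hg : GPeq c ψ)
    (hu : ∀ x, ‖ψ x‖ ^ 2 ≤ 3 / 2) (x0 : Ed 3) : ∑ j, ‖pd ψ j x0‖ ^ 2 ≤ 2025 := by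
  have hdiff : ∀ {f : Ed 3 → ℂ}, ContDiff ℝ (⊤ : ℕ∞) f → Differentiable ℝ f :=
    fun hf => hf.differentiable (by simp)
  set w : Ed 3 → ℝ := fun x =>
    (1 - ‖x - x0‖ ^ 2) ^ 2 * ∑ j, ‖pd ψ j x‖ ^ 2 + 209 * ‖ψ x‖ ^ 2 with hw
  have hwc : Continuous w := by
    have := h.continuous
    have h2 : ∀ j, Continuous (pd ψ j) := fun j => (contDiff_pd h j).continuous
    fun_prop
  obtain ⟨p, hpm, hp⟩ := (isCompact_closedBall x0 1).exists_isMaxOn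
    ⟨x0, mem_closedBall_self zero_le_one⟩ hwc.continuousOn
  have hw0 : ∑ j, ‖pd ψ j x0‖ ^ 2 ≤ w p := by
    have h1 : w x0 ≤ w p := hp (mem_closedBall_self zero_le_one)
    have h2 : 0 ≤ ‖ψ x0‖ ^ 2 := sq_nonneg _
    simp only [hw, sub_self, norm_zero] at h1 ⊢
    norm_num at h1 ⊢
    linarith
  refine hw0.trans ?_
  rw [mem_closedBall, dist_eq_norm] at hpm
  have hup := hu p
  have hup0 : 0 ≤ ‖ψ p‖ ^ 2 := sq_nonneg _
  rcases hpm.eq_or_lt with heq | hlt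
  · simp only [hw, heq]
    linarith
  set N := ∑ j, ‖pd ψ j p‖ ^ 2 with hN
  have hN0 : 0 ≤ N := Finset.sum_nonneg fun _ _ => sq_nonneg _
  set η := 1 - ‖p - x0‖ ^ 2 with hη
  have hη0 : 0 ≤ η := by have := norm_nonneg (p - x0); nlinarith
  have hη1 : η ≤ 1 := by have := sq_nonneg ‖p - x0‖; linarith
  suffices hN1 : N ≤ 1254 by
    simp only [hw, ← hη, ← hN]
    have : η ^ 2 * N ≤ 1 * N := by gcongr; nlinarith
    linarith
  have hloc : ∀ k, IsLocalMax (fun t : ℝ => w (p + t • bv k)) 0 := by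
    intro k
    have hcl : Tendsto (fun t : ℝ => p + t • bv k) (𝓝 0) (𝓝 p) := by
      have : Continuous fun t : ℝ => p + t • bv k := by fun_prop
      simpa using this.tendsto 0
    have : closedBall x0 1 ∈ 𝓝 p := by
      refine mem_of_superset (isOpen_ball.mem_nhds ?_) (ball_subset_closedBall)
      rwa [mem_ball, dist_eq_norm]
    filter_upwards [hcl.eventually this] with t ht
    simpa using hp ht
  have hk : ∀ k, (-68) * N + η ^ 2 * (∑ j, ‖pd (pd ψ j) k p‖ ^ 2 +
      2 * ∑ j, inner ℝ (pd ψ j p) (pd (pd (pd ψ j) k) k p)) +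
      418 * (‖pd ψ k p‖ ^ 2 + inner ℝ (ψ p) (pd (pd ψ k) k p)) ≤ 0 := by
    intro k
    have b0 := hasDerivAt_line (hdiff h) p k
    have b1 := hasDerivAt_line (hdiff (contDiff_pd h k)) p k
    have a0 := fun j => hasDerivAt_line (hdiff (contDiff_pd h j)) p k
    have a1 := fun j => hasDerivAt_line (hdiff (contDiff_pd (contDiff_pd h j) k)) p k
    have e0 : ∀ t : ℝ, HasDerivAt (fun t : ℝ => 1 - ‖p + t • bv k - x0‖ ^ 2)
        (-(2 * inner ℝ (p + t • bv k - x0) (bv k))) t := by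
      intro t
      have h1 : HasDerivAt (fun t : ℝ => p + t • bv k - x0) (bv k) t := by
        simpa using (((hasDerivAt_id t).smul_const (bv k)).const_add p).sub_const x0
      exact h1.norm_sq.const_sub 1
    have e1 : HasDerivAt (fun t : ℝ => -(2 * inner ℝ (p + t • bv k - x0) (bv k))) (-2) 0 := by
      have h1 : HasDerivAt (fun t : ℝ => p + t • bv k - x0) (bv k) 0 := by
        simpa using (((hasDerivAt_id (0 : ℝ)).smul_const (bv k)).const_add p).sub_const x0
      have := ((h1.inner ℝ (hasDerivAt_const 0 (bv k))).const_mul 2).neg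
      refine this.congr_deriv ?_
      simp
    have d1 := fun t => ((((e0 t).pow 2).mul
      (HasDerivAt.fun_sum (u := Finset.univ) fun j _ => (a0 j t).norm_sq))).add
        ((b0 t).norm_sq.const_mul 209)
    have d2 := (((((e0 0).pow 1).const_mul (2 : ℝ)).mul e1).mul
      (HasDerivAt.fun_sum (u := Finset.univ) fun j _ => (a0 j 0).norm_sq)).add
      ((((e0 0).pow 2).mul (HasDerivAt.fun_sum (u := Finset.univ) fun j _ =>
        (((a0 j 0).inner ℝ (a1 j 0)).const_mul 2)))) |>.add
        ((((b0 0).inner ℝ (b1 0)).const_mul 2).const_mul 209)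
    have hsd := second_deriv_nonpos (hloc k) d1 d2
    simp only [Pi.mul_apply, Pi.pow_apply, zero_smul, add_zero, pow_one, Nat.cast_ofNat, Nat.cast_one,
      Nat.add_one_sub_one, Nat.sub_self, pow_zero, one_mul, mul_one, ← hη, ← hN,
      real_inner_self_eq_norm_sq, ← Finset.mul_sum, Finset.sum_add_distrib] at hsd
    set l := inner ℝ (p - x0) (bv k) with hl
    have hl1 : |l| ≤ 1 := by
      refine (abs_real_inner_le_norm _ _).trans ?_
      simpa using hpm
    have hS := inner_sum_le Finset.univ (fun j => pd ψ j p) (fun j => pd (pd ψ j) k p) η l hl1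
    rw [← hN] at hS
    have hlN : 0 ≤ l ^ 2 * N := by positivity
    have hηN : η * N ≤ 1 * N := by gcongr
    nlinarith
  have hsum := Finset.sum_nonpos fun k (_ : k ∈ Finset.univ) => hk k
  simp only [Finset.sum_add_distrib, ← Finset.mul_sum, ← inner_sum, ← hN, lap_eq hg] at hsum
  have hcomm : ∑ k, ∑ j, inner ℝ (pd ψ j p) (pd (pd (pd ψ j) k) k p) =
      ∑ j, inner ℝ (pd ψ j p) (∑ k, pd (pd (pd ψ j) k) k p) := by
    rw [Finset.sum_comm]
    simp only [inner_sum]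
  rw [hcomm] at hsum
  set D := ∑ k, ∑ j, ‖pd (pd ψ j) k p‖ ^ 2 with hD
  have hA : -D - 4 * N ≤ 2 * ∑ j, inner ℝ (pd ψ j p) (∑ k, pd (pd (pd ψ j) k) k p) := by
    have h0 : ∑ j, ‖pd (pd ψ j) 0 p‖ ^ 2 ≤ D :=
      Finset.single_le_sum (f := fun k => ∑ j, ‖pd (pd ψ j) k p‖ ^ 2)
        (fun k _ => Finset.sum_nonneg fun _ _ => sq_nonneg _) (Finset.mem_univ 0)
    have h1 : ∑ j, (-‖pd (pd ψ j) 0 p‖ ^ 2 - 4 * ‖pd ψ j p‖ ^ 2) ≤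
        ∑ j, 2 * inner ℝ (pd ψ j p) (∑ k, pd (pd (pd ψ j) k) k p) := by
      apply Finset.sum_le_sum
      intro j _
      rw [lap_pd_eq h hg]
      exact bern_A hc hup0 _ _ _
    rw [Finset.sum_sub_distrib, Finset.sum_neg_distrib, ← Finset.mul_sum, ← Finset.mul_sum] at h1
    linarith
  have hB := bern_B hc (ψ p) (pd ψ 0 p) hup
  have h0 : ‖pd ψ 0 p‖ ^ 2 ≤ N :=
    Finset.single_le_sum (f := fun k => ‖pd ψ k p‖ ^ 2) (fun k _ => sq_nonneg _) (Finset.mem_univ 0)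
  have hη2 : η ^ 2 ≤ 1 := by nlinarith
  have hηN : η ^ 2 * N ≤ 1 * N := by gcongr
  have hηA := mul_le_mul_of_nonneg_left hA (sq_nonneg η)
  simp only [Finset.sum_const, Finset.card_univ, Fintype.card_fin, nsmul_eq_mul,
    Nat.cast_ofNat] at hsum
  nlinarith

/-! ### Fubini along longitudinal lines -/

/-- Partial derivative of a real function. -/
def dr (f : Ed 3 → ℝ) (k : Fin 3) (x : Ed 3) : ℝ := fderiv ℝ f x (bv k)

/-- Embedding of the transverse plane. -/
def emb : (Fin 2 → ℝ) →L[ℝ] Ed 3 :=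
  (ContinuousLinearMap.proj 0).smulRight (bv 1) + (ContinuousLinearMap.proj 1).smulRight (bv 2)

/-- The point with longitudinal coordinate `t` and transverse coordinates `y`. -/
def pt (t : ℝ) (y : Fin 2 → ℝ) : Ed 3 := emb y + t • bv 0

lemma pt_zero (t : ℝ) (y : Fin 2 → ℝ) : pt t y 0 = t := by simp [pt, emb]
lemma pt_one (t : ℝ) (y : Fin 2 → ℝ) : pt t y 1 = y 0 := by simp [pt, emb]
lemma pt_two (t : ℝ) (y : Fin 2 → ℝ) : pt t y 2 = y 1 := by simp [pt, emb]

lemma abs_t_le (t : ℝ) (y : Fin 2 → ℝ) : |t| ≤ ‖pt t y‖ := by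
  have := PiLp.norm_apply_le (pt t y) 0
  rwa [pt_zero, Real.norm_eq_abs] at this

lemma norm_y_le (t : ℝ) (y : Fin 2 → ℝ) : ‖y‖ ≤ ‖pt t y‖ := by
  rw [pi_norm_le_iff_of_nonneg (norm_nonneg _)]
  intro i
  fin_cases i
  · have := PiLp.norm_apply_le (pt t y) 1
    rwa [pt_one] at this
  · have := PiLp.norm_apply_le (pt t y) 2
    rwa [pt_two] at this

lemma continuous_pt : Continuous fun z : ℝ × (Fin 2 → ℝ) => pt z.1 z.2 := by
  unfold pt; fun_prop

lemma continuous_pt_t (y : Fin 2 → ℝ) : Continuous fun t => pt t y := by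
  unfold pt; fun_prop

/-- The measurable equivalence `(t, y) ↦ pt t y`. -/
def ptE : ℝ × (Fin 2 → ℝ) ≃ᵐ Ed 3 :=
  (MeasurableEquiv.piFinSuccAbove (fun _ : Fin 3 => ℝ) 0).symm.trans
    (MeasurableEquiv.toLp 2 (Fin 3 → ℝ))

lemma ptE_apply (z : ℝ × (Fin 2 → ℝ)) : ptE z = pt z.1 z.2 := by
  ext i
  fin_cases i
  · exact (pt_zero _ _).symm
  · exact (pt_one _ _).symm
  · exact (pt_two _ _).symm

lemma mp_ptE : MeasurePreserving ptE ((volume : Measure ℝ).prod (volume : Measure (Fin 2 → ℝ)))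
    volume :=
  ((volume_preserving_piFinSuccAbove (fun _ : Fin 3 => ℝ) 0).symm).trans
    (PiLp.volume_preserving_toLp (Fin 3))

lemma lintegral_pt (f : Ed 3 → ℝ≥0∞) (hf : Measurable f) :
    ∫⁻ x, f x = ∫⁻ y, ∫⁻ t, f (pt t y) := by
  rw [← mp_ptE.lintegral_comp hf, lintegral_prod_symm]
  · simp only [ptE_apply]
  · exact (hf.comp ptE.measurable).aemeasurable

lemma integrable_ptE {f : Ed 3 → ℝ} (hf : Integrable f) :
    Integrable (fun z : ℝ × (Fin 2 → ℝ) => f (pt z.1 z.2)) (volume.prod volume) := by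
  have := (mp_ptE.integrable_comp_emb ptE.measurableEmbedding (g := f)).2 hf
  simpa only [Function.comp_def, ptE_apply] using this

lemma integral_pt {f : Ed 3 → ℝ} (hf : Integrable f) :
    ∫ x, f x = ∫ y, ∫ t, f (pt t y) := by
  rw [← mp_ptE.integral_comp ptE.measurableEmbedding]
  simp only [ptE_apply]
  rw [integral_prod_symm _ (integrable_ptE hf)]

lemma hasDerivAt_pt {f : Ed 3 → ℝ} (hf : Differentiable ℝ f) (y : Fin 2 → ℝ) (t : ℝ) :
    HasDerivAt (fun t : ℝ => f (pt t y)) (dr f 0 (pt t y)) t := by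
  have h1 : HasDerivAt (fun t : ℝ => pt t y) (bv 0) t := by
    simpa [pt] using ((hasDerivAt_id t).smul_const (bv 0)).const_add (emb y)
  exact (hf _).hasFDerivAt.comp_hasDerivAt t h1

lemma integral_dr_zero {f : Ed 3 → ℝ} (hf : ContDiff ℝ 1 f) (hcs : HasCompactSupport f)
    (y : Fin 2 → ℝ) : ∫ t, dr f 0 (pt t y) = 0 := by
  have hd := hasDerivAt_pt (hf.differentiable (by norm_num)) y
  obtain ⟨R, hR⟩ := hcs.isCompact.isBounded.subset_closedBall (0 : Ed 3)
  have hz : ∀ t, R < |t| → f (pt t y) = 0 := by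
    intro t ht
    by_contra h
    have := hR (subset_tsupport _ h)
    rw [mem_closedBall, dist_zero_right] at this
    linarith [abs_t_le t y]
  have hg : HasCompactSupport fun t => f (pt t y) := by
    refine HasCompactSupport.intro (isCompact_closedBall (0 : ℝ) R) fun t ht => hz t ?_
    simpa [mem_closedBall] using ht
  have e : (fun t => dr f 0 (pt t y)) = deriv fun t => f (pt t y) :=
    funext fun t => (hd t).deriv.symm
  have hcd : Continuous fun t => dr f 0 (pt t y) :=
    ((hf.continuous_fderiv (by norm_num)).comp (continuous_pt_t y)).clm_apply continuous_const
  rw [e]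
  rw [e] at hcd
  have hc2 : ContDiff ℝ 1 fun t => f (pt t y) :=
    contDiff_one_iff_deriv.2 ⟨fun t => (hd t).differentiableAt, hcd⟩
  exact integral_eq_zero_of_hasDerivAt_of_integrable
    (fun t => (hc2.differentiable (by norm_num) t).hasDerivAt)
    (hcd.integrable_of_hasCompactSupport hg.deriv)
    (hc2.continuous.integrable_of_hasCompactSupport hg)

/-! ### Line integrals of compactly supported forms -/

/-- Integral of `f` along the longitudinal line through `y`. -/
def lineInt (f : Ed 3 → ℝ) (y : Fin 2 → ℝ) : ℝ := ∫ t, f (pt t y)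

lemma lineInt_eq_set {f : Ed 3 → ℝ} {R : ℝ} (hR : tsupport f ⊆ closedBall (0 : Ed 3) R)
    (y : Fin 2 → ℝ) : lineInt f y = ∫ t in closedBall (0 : ℝ) R, f (pt t y) := by
  symm
  apply setIntegral_eq_integral_of_forall_compl_eq_zero
  intro t ht
  by_contra h
  have := hR (subset_tsupport _ h)
  rw [mem_closedBall, dist_zero_right] at this ht
  exact ht ((abs_t_le t y).trans this)

lemma fderiv_support {f : Ed 3 → ℝ} {R : ℝ} (hR : tsupport f ⊆ closedBall (0 : Ed 3) R)
    (x : Ed 3) (hx : R < ‖x‖) : fderiv ℝ f x = 0 := by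
  by_contra h
  have h1 : x ∈ tsupport f := (support_fderiv_subset ℝ) h
  have := hR h1
  rw [mem_closedBall, dist_zero_right] at this
  linarith

/-- Differentiation under the integral sign. -/
lemma hasFDerivAt_lineInt {f : Ed 3 → ℝ} (hf : ContDiff ℝ 1 f) (hcs : HasCompactSupport f)
    {R : ℝ} (hR : tsupport f ⊆ closedBall (0 : Ed 3) R) (y : Fin 2 → ℝ) :
    HasFDerivAt (lineInt f)
      (∫ t in closedBall (0 : ℝ) R, (fderiv ℝ f (pt t y)).comp emb) y := by
  have hfc : Continuous (fderiv ℝ f) := hf.continuous_fderiv (by norm_num)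
  obtain ⟨B, hB⟩ := (hcs.fderiv (𝕜 := ℝ)).exists_bound_of_continuous hfc
  rw [show lineInt f = fun y => ∫ t in closedBall (0 : ℝ) R, f (pt t y) from
    funext (lineInt_eq_set hR)]
  have hfin : IsFiniteMeasure (volume.restrict (closedBall (0 : ℝ) R)) :=
    ⟨by simpa using (isCompact_closedBall (0 : ℝ) R).measure_lt_top (μ := volume)⟩
  apply hasFDerivAt_integral_of_dominated_of_fderiv_le
    (F' := fun y t => (fderiv ℝ f (pt t y)).comp emb)
    (bound := fun _ => B * ‖emb‖) (s := Set.univ) univ_mem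
  · exact Eventually.of_forall fun y =>
      (hf.continuous.comp (continuous_pt_t y)).aestronglyMeasurable
  · exact ((hf.continuous.comp (continuous_pt_t y)).continuousOn.integrableOn_compact
      (isCompact_closedBall _ _))
  · refine Continuous.aestronglyMeasurable ?_
    exact (hfc.comp (continuous_pt_t y)).clm_comp continuous_const
  · refine Eventually.of_forall fun t y _ => ?_
    exact (ContinuousLinearMap.opNorm_comp_le _ _).trans (by gcongr; exact hB _)
  · exact integrable_const _
  · refine Eventually.of_forall fun t y _ => ?_
    have h1 : HasFDerivAt (fun y => pt t y) emb y := by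
      unfold pt
      exact emb.hasFDerivAt.add_const _
    exact ((hf.differentiable (by norm_num)) _).hasFDerivAt.comp y h1

lemma contDiff_lineInt {f : Ed 3 → ℝ} (hf : ContDiff ℝ 1 f) (hcs : HasCompactSupport f) :
    ContDiff ℝ 1 (lineInt f) := by
  obtain ⟨R, hR⟩ := hcs.isCompact.isBounded.subset_closedBall (0 : Ed 3)
  have hd := hasFDerivAt_lineInt hf hcs hR
  rw [contDiff_one_iff_fderiv]
  refine ⟨fun y => (hd y).differentiableAt, ?_⟩
  rw [show fderiv ℝ (lineInt f) = _ from funext fun y => (hd y).fderiv]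
  have hfc : Continuous (fderiv ℝ f) := hf.continuous_fderiv (by norm_num)
  apply continuous_parametric_integral_of_continuous _ (isCompact_closedBall _ _)
  have : Continuous fun z : (Fin 2 → ℝ) × ℝ => pt z.2 z.1 := continuous_pt.comp continuous_swap
  exact (hfc.comp this).clm_comp continuous_const

lemma hasCompactSupport_lineInt {f : Ed 3 → ℝ} (hcs : HasCompactSupport f) :
    HasCompactSupport (lineInt f) := by
  obtain ⟨R, hR⟩ := hcs.isCompact.isBounded.subset_closedBall (0 : Ed 3)
  refine HasCompactSupport.intro (isCompact_closedBall (0 : Fin 2 → ℝ) R) fun y hy => ?_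
  have : ∀ t, f (pt t y) = 0 := by
    intro t
    by_contra h
    have := hR (subset_tsupport _ h)
    rw [mem_closedBall, dist_zero_right] at this hy
    exact hy ((norm_y_le t y).trans this)
  simp [lineInt, this]

/-- The transverse derivatives of the line integral of a 1-form only see the curl, since
`∫ ∂₁ w_j = 0` along each line. -/
lemma enorm_fderiv_lineInt_le {w : Fin 3 → Ed 3 → ℝ} (hw : ∀ j, ContDiff ℝ 1 (w j))
    (hcs : ∀ j, HasCompactSupport (w j)) {g : Ed 3 → ℝ≥0∞}
    (hg : ∀ j x, ‖dr (w 0) j x - dr (w j) 0 x‖ₑ ≤ g x) (y : Fin 2 → ℝ) :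
    ‖fderiv ℝ (lineInt (w 0)) y‖ₑ ≤ 2 * ∫⁻ t, g (pt t y) := by
  obtain ⟨R, hR⟩ := (hcs 0).isCompact.isBounded.subset_closedBall (0 : Ed 3)
  rw [(hasFDerivAt_lineInt (hw 0) (hcs 0) hR y).fderiv]
  have hfc : ∀ j, Continuous (fderiv ℝ (w j)) := fun j => (hw j).continuous_fderiv (by norm_num)
  have hci : IntegrableOn (fun t => (fderiv ℝ (w 0) (pt t y)).comp emb) (closedBall (0 : ℝ) R) := by
    have h0 : Continuous fun t => (fderiv ℝ (w 0) (pt t y)).comp emb :=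
      ((hfc 0).comp (continuous_pt_t y)).clm_comp continuous_const
    exact h0.continuousOn.integrableOn_compact (isCompact_closedBall _ _)
  have hdc : ∀ i j, Continuous fun t => dr (w i) j (pt t y) := fun i j =>
    ((hfc i).comp (continuous_pt_t y)).clm_apply continuous_const
  have hdi : ∀ i j, Integrable fun t => dr (w i) j (pt t y) := by
    intro i j
    obtain ⟨R', hR'⟩ := (hcs i).isCompact.isBounded.subset_closedBall (0 : Ed 3)
    refine (hdc i j).integrable_of_hasCompactSupport
      (HasCompactSupport.intro (isCompact_closedBall (0 : ℝ) R') fun t ht => ?_)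
    rw [mem_closedBall, dist_zero_right, not_le] at ht
    simp [dr, fderiv_support hR' (pt t y) (ht.trans_le (abs_t_le t y))]
  have hb : ∀ j, ‖∫ t, dr (w 0) j (pt t y)‖ₑ ≤ ∫⁻ t, g (pt t y) := by
    intro j
    have : ∫ t, dr (w 0) j (pt t y) = ∫ t, (dr (w 0) j (pt t y) - dr (w j) 0 (pt t y)) := by
      rw [integral_sub (hdi _ _) (hdi _ _), integral_dr_zero (hw j) (hcs j), sub_zero]
    rw [this]
    exact (enorm_integral_le_lintegral_enorm _).trans (lintegral_mono fun t => hg j _)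
  apply ContinuousLinearMap.opENorm_le_bound
  intro v
  rw [ContinuousLinearMap.integral_apply hci]
  have e1 : ∫ t in closedBall (0 : ℝ) R, ((fderiv ℝ (w 0) (pt t y)).comp emb) v =
      ∫ t, (v 0 * dr (w 0) 1 (pt t y) + v 1 * dr (w 0) 2 (pt t y)) := by
    rw [setIntegral_eq_integral_of_forall_compl_eq_zero]
    · congr 1
      ext t
      simp [emb, dr]
    · intro t ht
      rw [mem_closedBall, dist_zero_right, not_le] at ht
      simp [fderiv_support hR (pt t y) (ht.trans_le (abs_t_le t y))]
  rw [e1, integral_add ((hdi _ _).const_mul _) ((hdi _ _).const_mul _), integral_const_mul,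
    integral_const_mul]
  have hv : ∀ i, ‖v i‖ₑ ≤ ‖v‖ₑ := fun i => by
    rw [enorm_le_iff_norm_le]; exact norm_le_pi_norm v i
  calc _ ≤ ‖v 0 * (∫ t, dr (w 0) 1 (pt t y))‖ₑ + ‖v 1 * (∫ t, dr (w 0) 2 (pt t y))‖ₑ := enorm_add_le _ _
    _ ≤ ‖v‖ₑ * (∫⁻ t, g (pt t y)) + ‖v‖ₑ * (∫⁻ t, g (pt t y)) := by
        rw [enorm_mul, enorm_mul]
        gcongr
        · exact hv 0
        · exact hb 1
        · exact hv 1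
        · exact hb 2
    _ = _ := by ring

/-- `L²` bound for the line integrals, from the two-dimensional Gagliardo–Nirenberg–Sobolev
inequality `‖f‖_{L²(ℝ²)} ≤ ‖∇f‖_{L¹(ℝ²)}`. -/
lemma lintegral_lineInt_sq_le {w : Fin 3 → Ed 3 → ℝ} (hw : ∀ j, ContDiff ℝ 1 (w j))
    (hcs : ∀ j, HasCompactSupport (w j)) {g : Ed 3 → ℝ≥0∞} (hgm : Measurable g)
    (hg : ∀ j x, ‖dr (w 0) j x - dr (w j) 0 x‖ₑ ≤ g x) :
    ∫⁻ y, ‖lineInt (w 0) y‖ₑ ^ 2 ≤ (2 * ∫⁻ x, g x) ^ 2 := by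
  have h := lintegral_pow_le_pow_lintegral_fderiv_aux (ι := Fin 2) (p := 2)
    (by simpa using Real.HolderConjugate.two_two) (contDiff_lineInt (hw 0) (hcs 0))
    (hasCompactSupport_lineInt (hcs 0))
  simp only [ENNReal.rpow_two] at h
  refine h.trans ?_
  gcongr
  rw [lintegral_pt g hgm, ← lintegral_const_mul']
  · exact lintegral_mono fun y => enorm_fderiv_lineInt_le hw hcs hg y
  · simp

/-! ### The regularized phase gradient and its curl -/

/-- The function `1/s`, continued below `s = a` by its tangent line at `a`. -/
def Gq (a s : ℝ) : ℝ := if s ≤ a then 2 / a - s / a ^ 2 else 1 / s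

/-- The derivative of `Gq a`. -/
def Gq' (a s : ℝ) : ℝ := if s ≤ a then -1 / a ^ 2 else -1 / s ^ 2

lemma hasDerivAt_Gq {a : ℝ} (ha : 0 < a) (s : ℝ) : HasDerivAt (Gq a) (Gq' a s) s := by
  have h1 : ∀ s, HasDerivAt (fun s : ℝ => 2 / a - s / a ^ 2) (-1 / a ^ 2) s := by
    intro s
    have := ((hasDerivAt_id s).div_const (a ^ 2)).const_sub (2 / a)
    simpa [neg_div] using this
  have h2 : ∀ s : ℝ, 0 < s → HasDerivAt (fun s : ℝ => 1 / s) (-1 / s ^ 2) s := by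
    intro s hs
    simpa [neg_div] using hasDerivAt_inv hs.ne'
  rcases lt_trichotomy s a with h | h | h
  · rw [Gq', if_pos h.le]
    refine (h1 s).congr_of_eventuallyEq ?_
    filter_upwards [Iio_mem_nhds h] with t ht
    rw [Gq, if_pos (le_of_lt ht)]
  · subst h
    rw [Gq', if_pos le_rfl, ← hasDerivWithinAt_univ, ← Set.Iic_union_Ici (a := s)]
    refine HasDerivWithinAt.union ?_ ?_
    · refine (h1 s).hasDerivWithinAt.congr (fun t ht => ?_) ?_
      · rw [Gq, if_pos (show t ≤ s from ht)]
      · rw [Gq, if_pos le_rfl]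
    · have e : 2 / s - s / s ^ 2 = 1 / s := by field_simp; norm_num
      refine (h2 s ha).hasDerivWithinAt.congr (fun t ht => ?_) ?_
      · rcases (show s ≤ t from ht).eq_or_lt with h' | h'
        · subst h'; rw [Gq, if_pos le_rfl, e]
        · rw [Gq, if_neg (not_le.2 h')]
      · rw [Gq, if_pos le_rfl, e]
  · rw [Gq', if_neg (not_le.2 h)]
    refine (h2 s (ha.trans h)).congr_of_eventuallyEq ?_
    filter_upwards [Ioi_mem_nhds h] with t ht
    rw [Gq, if_neg (not_le.2 ht)]

lemma contDiff_Gq {a : ℝ} (ha : 0 < a) : ContDiff ℝ 1 (Gq a) := by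
  refine contDiff_one_iff_deriv.2 ⟨fun s => (hasDerivAt_Gq ha s).differentiableAt, ?_⟩
  rw [show deriv (Gq a) = Gq' a from funext fun s => (hasDerivAt_Gq ha s).deriv]
  have : Gq' a = fun s => -1 / (max s a) ^ 2 := by
    ext s
    rw [Gq']
    split_ifs with h
    · rw [max_eq_right h]
    · rw [max_eq_left (not_le.1 h).le]
  rw [this]
  refine continuous_const.div (by fun_prop) fun s => ?_
  have : 0 < max s a := lt_max_of_lt_right ha
  positivity

lemma Gq_of_ge {a s : ℝ} (ha : 0 < a) (h : a ≤ s) : Gq a s = 1 / s := by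
  rcases h.eq_or_lt with h | h
  · subst h
    rw [Gq, if_pos le_rfl]
    field_simp; norm_num
  · rw [Gq, if_neg (not_le.2 h)]

lemma abs_Gq_le {a s : ℝ} (ha : 0 < a) (hs : 0 ≤ s) (h : s ≤ a) : |Gq a s| ≤ 2 / a := by
  rw [Gq, if_pos h]
  have h1 : s / a ^ 2 ≤ 1 / a := by
    rw [div_le_div_iff₀ (by positivity) ha]; nlinarith
  have h2 : 0 ≤ s / a ^ 2 := by positivity
  have h3 : 0 < 1 / a := by positivity
  have h4 : 2 / a = 2 * (1 / a) := by ring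
  rw [abs_le]; constructor <;> linarith

lemma kappa_eq_zero {a s : ℝ} (ha : 0 < a) (h : a < s) : 2 * Gq a s + 2 * s * Gq' a s = 0 := by
  rw [Gq, Gq', if_neg (not_le.2 h), if_neg (not_le.2 h)]
  have : s ≠ 0 := (ha.trans h).ne'
  field_simp; norm_num

lemma abs_kappa_le {a s : ℝ} (ha : 0 < a) (hs : 0 ≤ s) (h : s ≤ a) :
    |2 * Gq a s + 2 * s * Gq' a s| ≤ 4 / a := by
  rw [Gq, Gq', if_pos h, if_pos h]
  have h1 : s / a ^ 2 ≤ 1 / a := by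
    rw [div_le_div_iff₀ (by positivity) ha]; nlinarith
  have h2 : 0 ≤ s / a ^ 2 := by positivity
  have h3 : 0 < 1 / a := by positivity
  have e : 2 * (2 / a - s / a ^ 2) + 2 * s * (-1 / a ^ 2) = 4 * (1 / a) - 4 * (s / a ^ 2) := by ring
  have h4 : 4 / a = 4 * (1 / a) := by ring
  rw [e, abs_le]; constructor <;> linarith

/-- The current `Im (conj ψ ∂_j ψ)`. -/
def JJ (ψ : Ed 3 → ℂ) (j : Fin 3) (x : Ed 3) : ℝ :=
  (ψ x).re * (pd ψ j x).im - (ψ x).im * (pd ψ j x).re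

/-- The regularized phase gradient, equal to `Im (∂_j ψ / ψ)` where `|ψ| ≥ q`. -/
def om (q : ℝ) (ψ : Ed 3 → ℂ) (j : Fin 3) (x : Ed 3) : ℝ := Gq (q ^ 2) (‖ψ x‖ ^ 2) * JJ ψ j x

lemma contDiff_re {ψ : Ed 3 → ℂ} {n : WithTop ℕ∞} (h : ContDiff ℝ n ψ) :
    ContDiff ℝ n fun x => (ψ x).re := Complex.reCLM.contDiff.comp h

lemma contDiff_im {ψ : Ed 3 → ℂ} {n : WithTop ℕ∞} (h : ContDiff ℝ n ψ) :
    ContDiff ℝ n fun x => (ψ x).im := Complex.imCLM.contDiff.comp h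

lemma contDiff_JJ {ψ : Ed 3 → ℂ} (h : ContDiff ℝ (⊤ : ℕ∞) ψ) (j : Fin 3) :
    ContDiff ℝ (⊤ : ℕ∞) (JJ ψ j) :=
  ((contDiff_re h).mul (contDiff_im (contDiff_pd h j))).sub
    ((contDiff_im h).mul (contDiff_re (contDiff_pd h j)))

lemma contDiff_om {q : ℝ} (hq : 0 < q) {ψ : Ed 3 → ℂ} (h : ContDiff ℝ (⊤ : ℕ∞) ψ) (j : Fin 3) :
    ContDiff ℝ 1 (om q ψ j) := by
  have h1 : ContDiff ℝ 1 ψ := h.of_le (by norm_cast)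
  have hu : ContDiff ℝ 1 fun x => ‖ψ x‖ ^ 2 := h1.norm_sq ℝ
  exact ((contDiff_Gq (by positivity)).comp hu).mul ((contDiff_JJ h j).of_le (by norm_cast))

lemma dr_eq {f : Ed 3 → ℝ} {k : Fin 3} {x : Ed 3} {d : ℝ} (hf : DifferentiableAt ℝ f x)
    (h : HasDerivAt (fun t : ℝ => f (x + t • bv k)) d 0) : dr f k x = d := by
  have h1 : HasDerivAt (fun t : ℝ => x + t • bv k) (bv k) 0 := by
    simpa using ((hasDerivAt_id (0 : ℝ)).smul_const (bv k)).const_add x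
  have hf' : HasFDerivAt f (fderiv ℝ f x) (x + (0 : ℝ) • bv k) := by
    simpa using hf.hasFDerivAt
  exact (hf'.comp_hasDerivAt (0 : ℝ) h1).unique h

lemma line_re {f : Ed 3 → ℂ} (hf : Differentiable ℝ f) (x : Ed 3) (k : Fin 3) (t : ℝ) :
    HasDerivAt (fun t : ℝ => (f (x + t • bv k)).re) (pd f k (x + t • bv k)).re t :=
  Complex.reCLM.hasFDerivAt.comp_hasDerivAt t (hasDerivAt_line hf x k t)

lemma line_im {f : Ed 3 → ℂ} (hf : Differentiable ℝ f) (x : Ed 3) (k : Fin 3) (t : ℝ) :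
    HasDerivAt (fun t : ℝ => (f (x + t • bv k)).im) (pd f k (x + t • bv k)).im t :=
  Complex.imCLM.hasFDerivAt.comp_hasDerivAt t (hasDerivAt_line hf x k t)

lemma dr_om {q : ℝ} (hq : 0 < q) {ψ : Ed 3 → ℂ} (h : ContDiff ℝ (⊤ : ℕ∞) ψ) (j k : Fin 3)
    (x : Ed 3) : dr (om q ψ j) k x =
      Gq' (q ^ 2) (‖ψ x‖ ^ 2) * (2 * ((ψ x).re * (pd ψ k x).re + (ψ x).im * (pd ψ k x).im))
        * JJ ψ j x
      + Gq (q ^ 2) (‖ψ x‖ ^ 2) * ((pd ψ k x).re * (pd ψ j x).im + (ψ x).re * (pd (pd ψ j) k x).im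
        - ((pd ψ k x).im * (pd ψ j x).re + (ψ x).im * (pd (pd ψ j) k x).re)) := by
  have hd : Differentiable ℝ ψ := h.differentiable (by simp)
  have hd' : Differentiable ℝ (pd ψ j) := (contDiff_pd h j).differentiable (by simp)
  apply dr_eq ((contDiff_om hq h j).differentiable (by norm_num) x)
  have r := line_re hd x k 0
  have i := line_im hd x k 0
  have r' := line_re hd' x k 0
  have i' := line_im hd' x k 0
  have u : HasDerivAt (fun t : ℝ => ‖ψ (x + t • bv k)‖ ^ 2)
      (2 * ((ψ x).re * (pd ψ k x).re + (ψ x).im * (pd ψ k x).im)) 0 := by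
    simp only [nsq]
    refine ((r.pow 2).add (i.pow 2)).congr_deriv ?_
    simp; ring
  have g := (hasDerivAt_Gq (a := q ^ 2) (by positivity) (‖ψ (x + (0 : ℝ) • bv k)‖ ^ 2)).comp
    (0 : ℝ) u
  have := g.mul ((r.mul i').sub (i.mul r'))
  refine this.congr_deriv ?_
  simp [JJ]

/-- The curl of `om` involves no second derivatives of `ψ`, and vanishes where `|ψ| > q`. -/
lemma curl_om {q : ℝ} (hq : 0 < q) {ψ : Ed 3 → ℂ} (h : ContDiff ℝ (⊤ : ℕ∞) ψ) (j : Fin 3)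
    (x : Ed 3) : dr (om q ψ 0) j x - dr (om q ψ j) 0 x =
      (2 * Gq (q ^ 2) (‖ψ x‖ ^ 2) + 2 * ‖ψ x‖ ^ 2 * Gq' (q ^ 2) (‖ψ x‖ ^ 2)) *
        ((pd ψ j x).re * (pd ψ 0 x).im - (pd ψ j x).im * (pd ψ 0 x).re) := by
  rw [dr_om hq h, dr_om hq h, pd_comm h 0 j x]
  set g := Gq (q ^ 2) (‖ψ x‖ ^ 2)
  set g' := Gq' (q ^ 2) (‖ψ x‖ ^ 2)
  rw [nsq (ψ x), JJ, JJ]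
  ring

lemma abs_cross_le (z w : ℂ) {B : ℝ} (hz : ‖z‖ ^ 2 ≤ B) (hw : ‖w‖ ^ 2 ≤ B) :
    |z.re * w.im - z.im * w.re| ≤ B := by
  rw [nsq] at hz hw
  rw [abs_le]
  constructor
  · nlinarith [sq_nonneg (z.re + w.im), sq_nonneg (z.im - w.re)]
  · nlinarith [sq_nonneg (z.re - w.im), sq_nonneg (z.im + w.re)]

lemma enorm_curl_le {q r : ℝ} (hq : 0 < q) (hqr : q < r) {ψ : Ed 3 → ℂ}
    (h : ContDiff ℝ (⊤ : ℕ∞) ψ) (hgr : ∀ j x, ‖pd ψ j x‖ ^ 2 ≤ 2025) (j : Fin 3) (x : Ed 3) :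
    ‖dr (om q ψ 0) j x - dr (om q ψ j) 0 x‖ₑ ≤
      (Sset ψ r).indicator (fun _ => ENNReal.ofReal (4 / q ^ 2 * 2025)) x := by
  rw [curl_om hq h]
  rcases le_or_gt (‖ψ x‖ ^ 2) (q ^ 2) with hx | hx
  · have hS : x ∈ Sset ψ r := by
      have := abs_le_of_sq_le_sq hx hq.le
      rw [abs_norm] at this
      exact this.trans_lt hqr
    rw [Set.indicator_of_mem hS, Real.enorm_eq_ofReal_abs, abs_mul]
    apply ENNReal.ofReal_le_ofReal
    gcongr
    · exact abs_kappa_le (by positivity) (by positivity) hx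
    · exact abs_cross_le _ _ (hgr j x) (hgr 0 x)
  · rw [kappa_eq_zero (by positivity) hx]
    simp

/-! ### The phase at infinity and quantization of line integrals -/

lemma contDiff_dr {F : Ed 3 → ℝ} (hF : ContDiff ℝ (⊤ : ℕ∞) F) (j : Fin 3) :
    ContDiff ℝ (⊤ : ℕ∞) (dr F j) := by
  have h1 : ContDiff ℝ (⊤ : ℕ∞) (fderiv ℝ F) := hF.fderiv_right (by norm_cast)
  exact h1.clm_apply contDiff_const

lemma dr_comm {F : Ed 3 → ℝ} (hF : ContDiff ℝ (⊤ : ℕ∞) F) (i j : Fin 3) (x : Ed 3) :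
    dr (dr F i) j x = dr (dr F j) i x := by
  have h1 : ContDiff ℝ (⊤ : ℕ∞) (fderiv ℝ F) := hF.fderiv_right (by norm_cast)
  have hd : DifferentiableAt ℝ (fderiv ℝ F) x := (h1.differentiable (by simp)) x
  have key : ∀ i j : Fin 3, dr (dr F i) j x = fderiv ℝ (fderiv ℝ F) x (bv j) (bv i) := by
    intro i j
    have := (hd.hasFDerivAt.clm_apply (hasFDerivAt_const (bv i) x)).fderiv
    unfold dr
    rw [this]
    simp
  rw [key, key]
  have hs : IsSymmSndFDerivAt ℝ F x := by
    apply ContDiffAt.isSymmSndFDerivAt (n := (⊤ : ℕ∞)) hF.contDiffAt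
    simp only [minSmoothness_of_isRCLikeNormedField]
    norm_cast
  exact hs.eq _ _

/-- Where the principal branch applies and `|ψ| > q`, the form `om q ψ` is the differential of the
argument of `ψ`. -/
lemma dr_log_im {ψ : Ed 3 → ℂ} (h : ContDiff ℝ (⊤ : ℕ∞) ψ) {q : ℝ} (hq : 0 < q) (j : Fin 3)
    (x : Ed 3) (hs : ψ x ∈ slitPlane) (hx : q < ‖ψ x‖) :
    ContDiffAt ℝ (⊤ : ℕ∞) (fun x => (log (ψ x)).im) x ∧
    dr (fun x => (log (ψ x)).im) j x = om q ψ j x := by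
  have hc : ContDiffAt ℝ (⊤ : ℕ∞) (fun x => (log (ψ x)).im) x := by
    have h1 : ContDiffAt ℝ (⊤ : ℕ∞) log (ψ x) := (contDiffAt_log hs).restrict_scalars ℝ
    exact Complex.imCLM.contDiff.contDiffAt.comp x (h1.comp x h.contDiffAt)
  refine ⟨hc, dr_eq (hc.differentiableAt (by simp)) ?_⟩
  have hd : Differentiable ℝ ψ := h.differentiable (by simp)
  have hl := (hasDerivAt_line hd x j 0).clog_real (by simpa using hs)
  have := Complex.imCLM.hasFDerivAt.comp_hasDerivAt (0 : ℝ) hl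
  refine this.congr_deriv ?_
  have hne : ψ x ≠ 0 := slitPlane_ne_zero hs
  have h2 : q ^ 2 ≤ ‖ψ x‖ ^ 2 := by gcongr
  simp only [imCLM_apply, zero_smul, add_zero]
  rw [om, Gq_of_ge (by positivity) h2, JJ, Complex.div_im, Complex.normSq_eq_norm_sq]
  ring

/-- Far out `ψ` is close to `1`; its phase there extends to a smooth function on the whole
space. -/
lemma exists_phase {ψ : Ed 3 → ℂ} (h : ContDiff ℝ (⊤ : ℕ∞) ψ)
    (hlim : Tendsto ψ (cocompact (Ed 3)) (𝓝 1)) {q : ℝ} (hq : 0 < q) (hq1 : q < 1) :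
    ∃ (F : Ed 3 → ℝ) (R : ℝ), ContDiff ℝ (⊤ : ℕ∞) F ∧ Tendsto F (cocompact (Ed 3)) (𝓝 0) ∧
      ∀ x, R < ‖x‖ → F x = (log (ψ x)).im ∧ ψ x ≠ 0 ∧ ∀ j, dr F j x = om q ψ j x := by
  have hev : ∀ᶠ x in cocompact (Ed 3), ‖ψ x - 1‖ < 1 - q := by
    have := (hlim.sub_const 1).norm
    rw [sub_self, norm_zero] at this
    exact this.eventually (gt_mem_nhds (by linarith))
  obtain ⟨K, hK, hKs⟩ := mem_cocompact.1 hev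
  obtain ⟨R, hR⟩ := hK.isBounded.subset_closedBall (0 : Ed 3)
  set R0 := max R 0
  have hfar : ∀ x : Ed 3, R0 < ‖x‖ → ψ x ∈ slitPlane ∧ q < ‖ψ x‖ := by
    intro x hx
    have hxK : x ∈ Kᶜ := by
      intro hm
      have := hR hm
      rw [mem_closedBall, dist_zero_right] at this
      exact absurd (lt_of_le_of_lt (le_max_left R 0) hx) (not_lt.2 this)
    have h1 : ‖ψ x - 1‖ < 1 - q := hKs hxK
    have h2 : |(ψ x).re - 1| ≤ ‖ψ x - 1‖ := by simpa using Complex.abs_re_le_norm (ψ x - 1)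
    have h3 : q < (ψ x).re := by linarith [(abs_le.1 (h2.trans h1.le)).1, (abs_lt.1 (h2.trans_lt h1)).1]
    exact ⟨Or.inl (hq.trans h3), h3.trans_le ((le_abs_self _).trans (Complex.abs_re_le_norm _))⟩
  have hR0 : 0 ≤ R0 := le_max_right _ _
  let f : ContDiffBump (0 : Ed 3) := ⟨R0 + 1, R0 + 2, by linarith, by linarith⟩
  have hout : ∀ x : Ed 3, R0 + 2 < ‖x‖ → (fun x => (1 - f x) * (log (ψ x)).im) =ᶠ[𝓝 x]
      fun x => (log (ψ x)).im := by
    intro x hx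
    have : {z : Ed 3 | R0 + 2 < ‖z‖} ∈ 𝓝 x := (isOpen_lt continuous_const continuous_norm).mem_nhds hx
    filter_upwards [this] with z hz
    have : f z = 0 := f.zero_of_le_dist (by rw [dist_zero_right]; exact le_of_lt hz)
    rw [this]; simp
  refine ⟨fun x => (1 - f x) * (log (ψ x)).im, R0 + 2, ?_, ?_, ?_⟩
  · rw [contDiff_iff_contDiffAt]
    intro x
    rcases lt_or_ge ‖x‖ (R0 + 1) with hx | hx
    · refine (contDiffAt_const (c := (0 : ℝ))).congr_of_eventuallyEq ?_
      have : {z : Ed 3 | ‖z‖ < R0 + 1} ∈ 𝓝 x :=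
        (isOpen_lt continuous_norm continuous_const).mem_nhds hx
      filter_upwards [this] with z hz
      have : f z = 1 := f.one_of_mem_closedBall (by
        rw [mem_closedBall, dist_zero_right]; exact le_of_lt hz)
      rw [this]; simp
    · have h1 := hfar x (by linarith)
      exact (contDiffAt_const.sub f.contDiffAt).mul (dr_log_im h hq 0 x h1.1 h1.2).1
  · have h1 : Tendsto (fun x => (log (ψ x)).im) (cocompact (Ed 3)) (𝓝 0) := by
      have h2 : ContinuousAt (fun z : ℂ => (log z).im) 1 :=
        Complex.continuous_im.continuousAt.comp (continuousAt_clog (by simp))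
      have := h2.tendsto.comp hlim
      simpa [Function.comp_def] using this
    refine h1.congr' ?_
    have : (closedBall (0 : Ed 3) (R0 + 2))ᶜ ∈ cocompact (Ed 3) :=
      (isCompact_closedBall _ _).compl_mem_cocompact
    filter_upwards [this] with x hx
    rw [Set.mem_compl_iff, mem_closedBall, dist_zero_right, not_le] at hx
    exact (hout x hx).self_of_nhds.symm
  · intro x hx
    have h1 := hfar x (by linarith)
    refine ⟨(hout x hx).self_of_nhds, slitPlane_ne_zero h1.1, fun j => ?_⟩
    rw [← (dr_log_im h hq j x h1.1 h1.2).2, dr, dr, (hout x hx).fderiv_eq]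

/-- Quantization: along a line on which `|ψ|` stays above `q`, the line integral of the phase
gradient corrected by its exact part at infinity is an integral multiple of `2π`. -/
lemma lineInt_quantized {ψ : Ed 3 → ℂ} (h : ContDiff ℝ (⊤ : ℕ∞) ψ) {q : ℝ} (hq : 0 < q)
    {F : Ed 3 → ℝ} {R : ℝ} (hF : ContDiff ℝ (⊤ : ℕ∞) F)
    (hout : ∀ x, R < ‖x‖ → F x = (log (ψ x)).im ∧ ψ x ≠ 0 ∧ ∀ j, dr F j x = om q ψ j x)
    (y : Fin 2 → ℝ) (hy : ∀ t, q < ‖ψ (pt t y)‖) :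
    ∃ n : ℤ, lineInt (fun x => om q ψ 0 x - dr F 0 x) y = n * (2 * Real.pi) := by
  set L := max R 0 + 1 with hL
  have hLpos : 0 < L := by positivity
  have hRL : R < L := by linarith [le_max_left R 0]
  have hd : Differentiable ℝ ψ := h.differentiable (by simp)
  have hne : ∀ t, ψ (pt t y) ≠ 0 := fun t h0 => by
    have := hy t; rw [h0, norm_zero] at this; linarith
  have hdψ : ∀ t, HasDerivAt (fun t => ψ (pt t y)) (pd ψ 0 (pt t y)) t := fun t =>
    hasDerivAt_line hd (emb y) 0 t
  have hc1 : Continuous fun t => ψ (pt t y) := h.continuous.comp (continuous_pt_t y)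
  have hc2 : Continuous fun t => pd ψ 0 (pt t y) :=
    (contDiff_pd h 0).continuous.comp (continuous_pt_t y)
  set l : ℝ → ℂ := fun t => pd ψ 0 (pt t y) / ψ (pt t y) with hl
  have hlc : Continuous l := hc2.div hc1 hne
  have hom : ∀ t, om q ψ 0 (pt t y) = (l t).im := by
    intro t
    have h2 : q ^ 2 ≤ ‖ψ (pt t y)‖ ^ 2 := by have := (hy t).le; gcongr
    rw [om, Gq_of_ge (by positivity) h2, JJ, hl, Complex.div_im, Complex.normSq_eq_norm_sq]
    ring
  -- The exponential of the primitive of `ψ'/ψ` recovers `ψ`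
  set Λ : ℝ → ℂ := fun t => ∫ s in (-L)..t, l s with hΛ
  have hdΛ : ∀ t, HasDerivAt Λ (l t) t := fun t =>
    intervalIntegral.integral_hasDerivAt_right (hlc.intervalIntegrable _ _)
      hlc.aestronglyMeasurable.stronglyMeasurableAtFilter hlc.continuousAt
  have hconst : ∀ t, HasDerivAt (fun t => ψ (pt t y) * exp (-Λ t)) 0 t := by
    intro t
    refine ((hdψ t).mul (hdΛ t).neg.cexp).congr_deriv ?_
    simp only [hl]
    field_simp [hne t]
    ring
  have heq : ψ (pt L y) * exp (-Λ L) = ψ (pt (-L) y) := by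
    have := is_const_of_deriv_eq_zero (fun t => (hconst t).differentiableAt)
      (fun t => (hconst t).deriv) L (-L)
    rw [this]
    simp [hΛ]
  have hpL : R < ‖pt L y‖ := hRL.trans_le ((le_abs_self L).trans (abs_t_le L y))
  have hpL' : R < ‖pt (-L) y‖ := by
    have := abs_t_le (-L) y
    rw [abs_neg] at this
    exact hRL.trans_le ((le_abs_self L).trans this)
  obtain ⟨n, hn⟩ : ∃ n : ℤ, Λ L - log (ψ (pt L y)) + log (ψ (pt (-L) y)) =
      n * (2 * Real.pi * I) := by
    apply Complex.exp_eq_one_iff.1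
    rw [exp_add, exp_sub, exp_log (hne _), exp_log (hne _), ← heq, exp_neg]
    field_simp [hne L, exp_ne_zero]
  refine ⟨n, ?_⟩
  have hval : lineInt (fun x => om q ψ 0 x - dr F 0 x) y =
      ∫ t in (-L)..L, (om q ψ 0 (pt t y) - dr F 0 (pt t y)) := by
    rw [lineInt, intervalIntegral.integral_of_le (by linarith)]
    symm
    rw [← integral_Icc_eq_integral_Ioc]
    apply setIntegral_eq_integral_of_forall_compl_eq_zero
    intro t ht
    have : L < |t| := by
      by_contra hc
      exact ht (abs_le.1 (not_lt.1 hc))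
    have := (hout (pt t y) (hRL.trans (this.trans_le (abs_t_le t y)))).2.2 0
    simp [this]
  have hFc : Continuous fun t => dr F 0 (pt t y) :=
    (contDiff_dr hF 0).continuous.comp (continuous_pt_t y)
  rw [hval]
  simp only [hom]
  have hlc' : Continuous fun t => (l t).im := Complex.continuous_im.comp hlc
  rw [intervalIntegral.integral_sub (hlc'.intervalIntegrable _ _) (hFc.intervalIntegrable _ _)]
  have e1 : ∫ t in (-L)..L, (l t).im = (Λ L).im :=
    Complex.imCLM.intervalIntegral_comp_comm (hlc.intervalIntegrable _ _)
  have e2 : ∫ t in (-L)..L, dr F 0 (pt t y) = F (pt L y) - F (pt (-L) y) :=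
    intervalIntegral.integral_eq_sub_of_hasDerivAt
      (fun t _ => hasDerivAt_pt (hF.differentiable (by simp)) y t) (hFc.intervalIntegrable _ _)
  rw [e1, e2, (hout _ hpL).1, (hout _ hpL').1]
  have := congrArg Complex.im hn
  simp only [Complex.add_im, Complex.sub_im] at this
  rw [show ((n : ℂ) * (2 * Real.pi * I)).im = n * (2 * Real.pi) by simp] at this
  linarith

/-! ### Lines meeting the low-modulus set -/

lemma measurableSet_Sset {ψ : Ed 3 → ℂ} (hψ : Continuous ψ) (r : ℝ) : MeasurableSet (Sset ψ r) :=
  (isOpen_lt hψ.norm continuous_const).measurableSet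

/-- Length of the part of the line through `y` lying in `{|ψ| < r}`. -/
def lineLen (ψ : Ed 3 → ℂ) (r : ℝ) (y : Fin 2 → ℝ) : ℝ≥0∞ :=
  ∫⁻ t, (Sset ψ r).indicator (fun _ => 1) (pt t y)

lemma measurable_lineLen {ψ : Ed 3 → ℂ} (hψ : Continuous ψ) (r : ℝ) :
    Measurable (lineLen ψ r) := by
  have h1 : Measurable fun z : (Fin 2 → ℝ) × ℝ =>
      (Sset ψ r).indicator (fun _ => (1 : ℝ≥0∞)) (pt z.2 z.1) :=
    (measurable_const.indicator (measurableSet_Sset hψ r)).comp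
      (continuous_pt.comp continuous_swap).measurable
  exact h1.lintegral_prod_right'

lemma lintegral_lineLen {ψ : Ed 3 → ℂ} (hψ : Continuous ψ) (r : ℝ) :
    ∫⁻ y, lineLen ψ r y = volume (Sset ψ r) := by
  rw [← lintegral_indicator_one (measurableSet_Sset hψ r), lintegral_pt]
  · rfl
  · exact measurable_one.indicator (measurableSet_Sset hψ r)

/-- A line meeting `{|ψ| ≤ q}` spends a definite length in `{|ψ| < r}`, by the gradient bound. -/
lemma lineLen_ge {ψ : Ed 3 → ℂ} (h : ContDiff ℝ (⊤ : ℕ∞) ψ) {q r : ℝ}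
    (hgr : ∀ j x, ‖pd ψ j x‖ ^ 2 ≤ 2025) (y : Fin 2 → ℝ) (t0 : ℝ) (ht0 : ‖ψ (pt t0 y)‖ ≤ q) :
    ENNReal.ofReal ((r - q) / 45) ≤ lineLen ψ r y := by
  have hd : Differentiable ℝ ψ := h.differentiable (by simp)
  have hdψ : ∀ t, HasDerivAt (fun t => ψ (pt t y)) (pd ψ 0 (pt t y)) t := fun t =>
    hasDerivAt_line hd (emb y) 0 t
  -- `45² = 2025`
  have hb : ∀ t, ‖pd ψ 0 (pt t y)‖ ≤ 45 := fun t => by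
    have := hgr 0 (pt t y)
    nlinarith [norm_nonneg (pd ψ 0 (pt t y))]
  have hlip : ∀ t, ‖ψ (pt t y) - ψ (pt t0 y)‖ ≤ 45 * ‖t - t0‖ := fun t =>
    Convex.norm_image_sub_le_of_norm_hasDerivWithin_le (s := Set.univ)
      (fun t _ => (hdψ t).hasDerivWithinAt) (fun t _ => hb t) convex_univ trivial trivial
  have hsub : ∀ t ∈ Set.Ioo t0 (t0 + (r - q) / 45), pt t y ∈ Sset ψ r := by
    intro t ht
    have h1 := hlip t
    rw [Real.norm_eq_abs, abs_of_pos (by linarith [ht.1])] at h1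
    have h2 := norm_le_norm_add_norm_sub' (ψ (pt t y)) (ψ (pt t0 y))
    have := ht.2
    change ‖ψ (pt t y)‖ < r
    linarith
  calc ENNReal.ofReal ((r - q) / 45) = volume (Set.Ioo t0 (t0 + (r - q) / 45)) := by
        rw [Real.volume_Ioo]; simp
    _ = ∫⁻ t, (Set.Ioo t0 (t0 + (r - q) / 45)).indicator 1 t :=
        (lintegral_indicator_one measurableSet_Ioo).symm
    _ ≤ _ := by
        refine lintegral_mono fun t => ?_
        by_cases ht : t ∈ Set.Ioo t0 (t0 + (r - q) / 45)
        · rw [Set.indicator_of_mem ht, Set.indicator_of_mem (hsub t ht)]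
          exact le_rfl
        · rw [Set.indicator_of_notMem ht]
          exact zero_le

/-- `L¹` bound for the line integrals of the corrected phase gradient. -/
lemma lintegral_lineInt_le {ψ : Ed 3 → ℂ} (h : ContDiff ℝ (⊤ : ℕ∞) ψ) {q r : ℝ} (hq : 0 < q)
    (hqr : q < r) (hgr : ∀ j x, ‖pd ψ j x‖ ^ 2 ≤ 2025)
    {F : Ed 3 → ℝ} {R : ℝ} (hF : ContDiff ℝ (⊤ : ℕ∞) F)
    (hout : ∀ x, R < ‖x‖ → F x = (log (ψ x)).im ∧ ψ x ≠ 0 ∧ ∀ j, dr F j x = om q ψ j x) :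
    ∫⁻ y, ‖lineInt (fun x => om q ψ 0 x - dr F 0 x) y‖ₑ ≤
      (2 * (ENNReal.ofReal (4 / q ^ 2 * 2025) * volume (Sset ψ r))) ^ 2 +
        volume (Sset ψ r) / ENNReal.ofReal ((r - q) / 45) := by
  set w : Fin 3 → Ed 3 → ℝ := fun j x => om q ψ j x - dr F j x with hw
  have hδ : 0 < (r - q) / 45 := by linarith
  have hdrC : ∀ j, ContDiff ℝ 1 (dr F j) := fun j => (contDiff_dr hF j).of_le (by norm_cast)
  have hw1 : ∀ j, ContDiff ℝ 1 (w j) := fun j => (contDiff_om hq h j).sub (hdrC j)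
  have hcs : ∀ j, HasCompactSupport (w j) := fun j => by
    refine HasCompactSupport.intro (isCompact_closedBall (0 : Ed 3) R) fun x hx => ?_
    rw [mem_closedBall, dist_zero_right, not_le] at hx
    simp [hw, (hout x hx).2.2 j]
  have hS := measurableSet_Sset h.continuous r
  have hcurl : ∀ j x, ‖dr (w 0) j x - dr (w j) 0 x‖ₑ ≤
      (Sset ψ r).indicator (fun _ => ENNReal.ofReal (4 / q ^ 2 * 2025)) x := by
    intro j x
    refine le_trans (le_of_eq ?_) (enorm_curl_le hq hqr h hgr j x)
    have e : ∀ i k, dr (w i) k x = dr (om q ψ i) k x - dr (dr F i) k x := by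
      intro i k
      have := fderiv_fun_sub ((contDiff_om hq h i).differentiable (by norm_num) x)
        ((hdrC i).differentiable (by norm_num) x)
      change fderiv ℝ (fun x => om q ψ i x - dr F i x) x (bv k) = _
      rw [this]; rfl
    rw [e, e, dr_comm hF 0 j x]
    congr 1
    ring
  have hsq := lintegral_lineInt_sq_le hw1 hcs (measurable_const.indicator hS) hcurl
  rw [lintegral_indicator_const hS] at hsq
  set A : Set (Fin 2 → ℝ) := {y | ENNReal.ofReal ((r - q) / 45) ≤ lineLen ψ r y}
  have hA : MeasurableSet A := measurableSet_le measurable_const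
    (measurable_lineLen h.continuous r)
  have hAm : volume A ≤ volume (Sset ψ r) / ENNReal.ofReal ((r - q) / 45) := by
    have := meas_ge_le_lintegral_div (μ := volume)
      (measurable_lineLen h.continuous r).aemeasurable
      (ENNReal.ofReal_pos.2 hδ).ne' ENNReal.ofReal_ne_top
    rwa [lintegral_lineLen h.continuous] at this
  -- Off `A` the line integral is in `2πℤ`, so it is dominated by its square; on `A` it is at
  -- most its square plus one.
  have hpt : ∀ y, ‖lineInt (w 0) y‖ₑ ≤ ‖lineInt (w 0) y‖ₑ ^ 2 + A.indicator 1 y := by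
    intro y
    by_cases hy : y ∈ A
    · rw [Set.indicator_of_mem hy, Pi.one_apply]
      rcases le_total (‖lineInt (w 0) y‖ₑ) 1 with h1 | h1
      · exact h1.trans le_add_self
      · exact (le_self_pow₀ h1 two_ne_zero).trans le_self_add
    · have hyq : ∀ t, q < ‖ψ (pt t y)‖ := by
        intro t
        by_contra hc
        exact hy (lineLen_ge h hgr y t (not_lt.1 hc))
      obtain ⟨n, hn⟩ := lineInt_quantized h hq hF hout y hyq
      change lineInt (w 0) y = _ at hn
      refine le_trans ?_ le_self_add
      rcases eq_or_ne n 0 with h0 | h0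
      · simp [hn, h0]
      · refine le_self_pow₀ ?_ two_ne_zero
        rw [hn, Real.enorm_eq_ofReal_abs, ENNReal.one_le_ofReal, abs_mul]
        have h2 : (1 : ℝ) ≤ |(n : ℝ)| := by exact_mod_cast Int.one_le_abs h0
        have h3 : 1 ≤ |2 * Real.pi| := by
          rw [abs_of_pos Real.two_pi_pos]; linarith [Real.pi_gt_three]
        nlinarith
  have hm : Measurable fun y => ‖lineInt (w 0) y‖ₑ ^ 2 :=
    ((contDiff_lineInt (hw1 0) (hcs 0)).continuous.measurable.enorm).pow_const 2
  calc _ ≤ ∫⁻ y, (‖lineInt (w 0) y‖ₑ ^ 2 + A.indicator 1 y) := lintegral_mono hpt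
    _ = (∫⁻ y, ‖lineInt (w 0) y‖ₑ ^ 2) + volume A := by
        rw [lintegral_add_left hm, lintegral_indicator_one hA]
    _ ≤ _ := add_le_add hsq hAm

/-- A function whose derivative in the first direction is integrable, and which vanishes at
infinity, has `∫ ∂₁H = 0`. -/
lemma integral_dr_eq_zero {H : Ed 3 → ℝ} (hH : Differentiable ℝ H)
    (hlim : Tendsto H (cocompact (Ed 3)) (𝓝 0)) (hi : Integrable (dr H 0)) :
    ∫ x, dr H 0 x = 0 := by
  rw [integral_pt hi]
  have : ∀ y, ∫ t, dr H 0 (pt t y) = 0 := by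
    intro y
    by_cases hiy : Integrable fun t => dr H 0 (pt t y)
    · have ht : Tendsto (fun t => pt t y) (cocompact ℝ) (cocompact (Ed 3)) := by
        rw [← cobounded_eq_cocompact, ← cobounded_eq_cocompact, ← comap_norm_atTop,
          ← comap_norm_atTop, tendsto_comap_iff]
        exact tendsto_atTop_mono (fun t => abs_t_le t y) tendsto_comap
      have h0 := integral_of_hasDerivAt_of_tendsto (hasDerivAt_pt hH y) hiy
        ((hlim.comp ht).mono_left atBot_le_cocompact)
        ((hlim.comp ht).mono_left atTop_le_cocompact)
      simpa using h0
    · exact integral_undef hiy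
  simp [this]

/-! ### The momentum estimate and the conclusion -/

lemma abs_JJ_le (ψ : Ed 3 → ℂ) (j : Fin 3) (x : Ed 3) : |JJ ψ j x| ≤ ‖ψ x‖ * ‖pd ψ j x‖ := by
  apply abs_le_of_sq_le_sq _ (by positivity)
  rw [mul_pow, nsq, nsq, JJ]
  nlinarith [sq_nonneg ((ψ x).re * (pd ψ j x).re + (ψ x).im * (pd ψ j x).im)]

lemma eDen_nonneg (ψ : Ed 3 → ℂ) (x : Ed 3) : 0 ≤ eDen ψ x := by
  unfold eDen gradSq; positivity

/-- Pointwise bound for the difference of the regularized phase gradient and the current: where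
`|ψ| ≥ q` it equals `(1 - |ψ|²) / |ψ|²` times the current and is controlled by the energy density;
elsewhere it is bounded, and that region lies in `{|ψ| < r}`. -/
lemma half_abs_om_sub_le {q r : ℝ} (hq : 0 < q) (hqr : q < r) (hr : r < 1) {ψ : Ed 3 → ℂ}
    (hgr : ∀ j x, ‖pd ψ j x‖ ^ 2 ≤ 2025) (x : Ed 3) :
    |1 / 2 * (om q ψ 0 x - JJ ψ 0 x)| ≤ eDen ψ x / (Real.sqrt 2 * q) +
      (Sset ψ r).indicator (fun _ => (2 / q ^ 2 + 1) * 2025) x := by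
  have hs2 : 0 < Real.sqrt 2 := by positivity
  have hind : 0 ≤ (Sset ψ r).indicator (fun _ => (2 / q ^ 2 + 1) * 2025) x :=
    Set.indicator_nonneg (fun _ _ => by positivity) x
  have hfac : om q ψ 0 x - JJ ψ 0 x = (Gq (q ^ 2) (‖ψ x‖ ^ 2) - 1) * JJ ψ 0 x := by
    rw [om]; ring
  rw [hfac]
  rcases le_or_gt q ‖ψ x‖ with hx | hx
  · refine le_trans ?_ (le_add_of_nonneg_right hind)
    have hp : 0 < ‖ψ x‖ := hq.trans_le hx
    have h2 : q ^ 2 ≤ ‖ψ x‖ ^ 2 := by gcongr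
    rw [Gq_of_ge (by positivity) h2]
    set p := ‖ψ x‖
    set e := ‖pd ψ 0 x‖ with he
    have hJ : |JJ ψ 0 x| ≤ p * e := abs_JJ_le ψ 0 x
    have hgE : 1 / 2 * e ^ 2 + 1 / 4 * (1 - p ^ 2) ^ 2 ≤ eDen ψ x := by
      unfold eDen gradSq
      have : ‖pd ψ 0 x‖ ^ 2 ≤ ∑ i, ‖pd ψ i x‖ ^ 2 :=
        Finset.single_le_sum (f := fun i => ‖pd ψ i x‖ ^ 2) (fun i _ => by positivity)
          (Finset.mem_univ 0)
      gcongr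
    have hd : |1 / p ^ 2 - 1| = |1 - p ^ 2| / p ^ 2 := by
      rw [show 1 / p ^ 2 - 1 = (1 - p ^ 2) / p ^ 2 by field_simp, abs_div,
        abs_of_pos (show 0 < p ^ 2 by positivity)]
    -- Young: `(√2 e - |1 - p²|)² ≥ 0`.
    have hY : Real.sqrt 2 * (1 / 2 * (|1 - p ^ 2| * e)) ≤
        1 / 2 * e ^ 2 + 1 / 4 * (1 - p ^ 2) ^ 2 := by
      have h3 := Real.sq_sqrt (show (0 : ℝ) ≤ 2 by norm_num)
      have h4 := sq_nonneg (Real.sqrt 2 * e - |1 - p ^ 2|)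
      have h5 := sq_abs (1 - p ^ 2)
      nlinarith
    calc |1 / 2 * ((1 / p ^ 2 - 1) * JJ ψ 0 x)| = 1 / 2 * (|1 - p ^ 2| / p ^ 2 * |JJ ψ 0 x|) := by
          rw [abs_mul, abs_mul, hd, abs_of_pos (show (0 : ℝ) < 1 / 2 by norm_num)]
      _ ≤ 1 / 2 * (|1 - p ^ 2| / p ^ 2 * (p * e)) := by gcongr
      _ = 1 / 2 * (|1 - p ^ 2| * e) / p := by field_simp
      _ ≤ 1 / 2 * (|1 - p ^ 2| * e) / q := by gcongr
      _ ≤ eDen ψ x / (Real.sqrt 2 * q) := by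
          rw [div_le_div_iff₀ hq (by positivity)]
          nlinarith
  · have hS : x ∈ Sset ψ r := hx.trans hqr
    rw [Set.indicator_of_mem hS]
    have h0 : 0 ≤ eDen ψ x / (Real.sqrt 2 * q) := div_nonneg (eDen_nonneg ψ x) (by positivity)
    refine le_trans ?_ (le_add_of_nonneg_left h0)
    have hJ : |JJ ψ 0 x| ≤ 2025 := by
      refine abs_cross_le _ _ ?_ (hgr 0 x)
      nlinarith [norm_nonneg (ψ x)]
    have hG := abs_Gq_le (a := q ^ 2) (s := ‖ψ x‖ ^ 2) (by positivity) (by positivity)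
      (by gcongr)
    have hG1 : |Gq (q ^ 2) (‖ψ x‖ ^ 2) - 1| ≤ 2 / q ^ 2 + 1 := by
      refine (abs_sub _ _).trans ?_
      rw [abs_one]; gcongr
    rw [abs_mul, abs_mul, abs_of_pos (show (0 : ℝ) < 1 / 2 by norm_num)]
    have : |Gq (q ^ 2) (‖ψ x‖ ^ 2) - 1| * |JJ ψ 0 x| ≤ (2 / q ^ 2 + 1) * 2025 := by gcongr
    have h6 : 0 ≤ |Gq (q ^ 2) (‖ψ x‖ ^ 2) - 1| * |JJ ψ 0 x| := by positivity
    linarith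

/-- The error term in the momentum estimate, as a function of the measure `M` of
`{|ψ| < r}`. -/
def errB (q r M : ℝ) : ℝ :=
  (2 / q ^ 2 + 1) * 2025 * M +
    1 / 2 * ((2 * (4 / q ^ 2 * 2025 * M)) ^ 2 + M / ((r - q) / 45))

/-- The momentum is at most `E / (√2 q)`, up to an error controlled by the measure of
`{|ψ| < r}`. -/
lemma mom_le {q r : ℝ} (hq : 0 < q) (hqr : q < r) (hr : r < 1) {ψ : Ed 3 → ℂ}
    (h : ContDiff ℝ (⊤ : ℕ∞) ψ) (hgr : ∀ j x, ‖pd ψ j x‖ ^ 2 ≤ 2025)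
    (hlim : Tendsto ψ (cocompact (Ed 3)) (𝓝 1)) (hE : FiniteEnergy ψ) {M : ℝ} (hM0 : 0 ≤ M)
    (hM : volume (Sset ψ r) ≤ ENNReal.ofReal M)
    (hi : Integrable fun x => (pd ψ 0 x).im * ((ψ x).re - 1)) :
    mom ψ ≤ energy ψ / (Real.sqrt 2 * q) + errB q r M := by
  obtain ⟨F, R, hF, hF0, hout⟩ := exists_phase h hlim hq (hqr.trans hr)
  have hS := measurableSet_Sset h.continuous r
  have hδ : 0 < (r - q) / 45 := by linarith
  have hSfin : volume (Sset ψ r) ≠ ⊤ := (hM.trans_lt ENNReal.ofReal_lt_top).ne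
  have hSreal : (volume (Sset ψ r)).toReal ≤ M := ENNReal.toReal_le_of_le_ofReal hM0 hM
  have hdrC : ContDiff ℝ 1 (dr F 0) := (contDiff_dr hF 0).of_le (by norm_cast)
  set W : Ed 3 → ℝ := fun x => om q ψ 0 x - dr F 0 x with hW
  set D : Ed 3 → ℝ := fun x => 1 / 2 * (om q ψ 0 x - JJ ψ 0 x) with hD
  set H : Ed 3 → ℝ := fun x => (ψ x).im * (2 - (ψ x).re) - F x with hH
  have hWc : Continuous W := (contDiff_om hq h 0).continuous.sub hdrC.continuous
  have hWi : Integrable W := by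
    refine hWc.integrable_of_hasCompactSupport
      (HasCompactSupport.intro (isCompact_closedBall (0 : Ed 3) R) fun x hx => ?_)
    rw [mem_closedBall, dist_zero_right, not_le] at hx
    simp [hW, (hout x hx).2.2 0]
  have hDc : Continuous D :=
    continuous_const.mul ((contDiff_om hq h 0).continuous.sub (contDiff_JJ h 0).continuous)
  have hI1 : Integrable fun x => eDen ψ x / (Real.sqrt 2 * q) := hE.div_const _
  have hI2 : Integrable ((Sset ψ r).indicator fun _ => (2 / q ^ 2 + 1) * 2025) :=
    (integrable_indicator_iff hS).2 (integrableOn_const hSfin)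
  have hDb := half_abs_om_sub_le hq hqr hr hgr
  have hDi : Integrable D := (hI1.add hI2).mono' hDc.aestronglyMeasurable
    (Eventually.of_forall fun x => hDb x)
  have hHs : ContDiff ℝ (⊤ : ℕ∞) H :=
    ((contDiff_im h).mul (contDiff_const.sub (contDiff_re h))).sub hF
  have hHd : Differentiable ℝ H := hHs.differentiable (by simp)
  have hdH : ∀ x, dr H 0 x =
      (pd ψ 0 x).im * (2 - (ψ x).re) - (ψ x).im * (pd ψ 0 x).re - dr F 0 x := by
    intro x
    apply dr_eq (hHd x)
    have hd : Differentiable ℝ ψ := h.differentiable (by simp)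
    have hFl : HasDerivAt (fun t : ℝ => F (x + t • bv 0)) (dr F 0 x) 0 := by
      have h1 : HasDerivAt (fun t : ℝ => x + t • bv 0) (bv 0) 0 := by
        simpa using ((hasDerivAt_id (0 : ℝ)).smul_const (bv (0 : Fin 3))).const_add x
      have hf' : HasFDerivAt F (fderiv ℝ F x) (x + (0 : ℝ) • bv 0) := by
        simpa using (hF.differentiable (by simp) x).hasFDerivAt
      exact hf'.comp_hasDerivAt (0 : ℝ) h1
    refine (((line_im hd x 0 0).mul ((line_re hd x 0 0).const_sub 2)).sub hFl).congr_deriv ?_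
    simp; ring
  -- The momentum density is `D - W/2`, up to the exact term `∂₁H/2`
  have hid : ∀ x, -((pd ψ 0 x).im * ((ψ x).re - 1)) = D x + 1 / 2 * dr H 0 x - 1 / 2 * W x := by
    intro x
    simp only [hD, hW, hdH, JJ]
    ring
  have hHi : Integrable (dr H 0) := by
    have e : dr H 0 = fun x =>
        2 * (-((pd ψ 0 x).im * ((ψ x).re - 1)) - D x + 1 / 2 * W x) := by
      ext x; rw [hid]; ring
    rw [e]
    exact ((hi.neg.sub hDi).add (hWi.const_mul _)).const_mul _
  have hH0 : Tendsto H (cocompact (Ed 3)) (𝓝 0) := by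
    have h1 : Tendsto (fun x => (ψ x).im) (cocompact (Ed 3)) (𝓝 0) :=
      (Complex.continuous_im.tendsto 1).comp hlim
    have h2 : Tendsto (fun x => (ψ x).re) (cocompact (Ed 3)) (𝓝 1) :=
      (Complex.continuous_re.tendsto 1).comp hlim
    simpa using (h1.mul (h2.const_sub 2)).sub hF0
  have hmom : mom ψ = (∫ x, D x) - 1 / 2 * ∫ x, W x := by
    rw [mom, ← integral_neg]
    simp only [hid]
    have hDH : Integrable fun x => D x + 1 / 2 * dr H 0 x := hDi.add (hHi.const_mul _)
    rw [integral_sub hDH (hWi.const_mul _),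
      integral_add hDi (hHi.const_mul _), integral_const_mul _ (dr H 0), integral_const_mul _ W,
      integral_dr_eq_zero hHd hH0 hHi]
    ring
  have hDle : ∫ x, D x ≤ energy ψ / (Real.sqrt 2 * q) + (2 / q ^ 2 + 1) * 2025 * M := by
    calc ∫ x, D x ≤ ∫ x, (eDen ψ x / (Real.sqrt 2 * q) +
          (Sset ψ r).indicator (fun _ => (2 / q ^ 2 + 1) * 2025) x) :=
          integral_mono hDi (hI1.add hI2) fun x => (le_abs_self _).trans (hDb x)
      _ = energy ψ / (Real.sqrt 2 * q) + (volume (Sset ψ r)).toReal * ((2 / q ^ 2 + 1) * 2025) := by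
          rw [integral_add hI1 hI2, integral_div, integral_indicator_const _ hS, energy]
          rfl
      _ ≤ _ := by
          rw [mul_comm _ M]
          gcongr
  have hWle : |∫ x, W x| ≤ (2 * (4 / q ^ 2 * 2025 * M)) ^ 2 + M / ((r - q) / 45) := by
    have e : ∫ x, W x = ∫ y, lineInt W y := integral_pt hWi
    rw [e, ← Real.norm_eq_abs, ← ENNReal.ofReal_le_ofReal_iff (by positivity), ofReal_norm]
    refine (enorm_integral_le_lintegral_enorm _).trans
      ((lintegral_lineInt_le h hq hqr hgr hF hout).trans ?_)
    rw [ENNReal.ofReal_add (by positivity) (by positivity), ENNReal.ofReal_pow (by positivity),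
      ENNReal.ofReal_mul (p := 2) (q := 4 / q ^ 2 * 2025 * M) (by norm_num),
      ENNReal.ofReal_mul (p := 4 / q ^ 2 * 2025) (q := M) (by positivity),
      ENNReal.ofReal_div_of_pos hδ]
    simp only [ENNReal.ofReal_ofNat]
    gcongr
  have := neg_abs_le (∫ x, W x)
  rw [hmom, errB]
  linarith

/-- Under a bound on the Lagrangian and on the measure of `{|ψ| < r}`, the energy is bounded. -/
lemma energy_le {q r c θ C M : ℝ} (hq : 0 < q) (hqr : q < r) (hr : r < 1) (hc0 : 0 < c)
    (hc2 : c < Real.sqrt 2) (hθ : c / (Real.sqrt 2 * q) ≤ θ) (hθ1 : θ < 1) {ψ : Ed 3 → ℂ}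
    (h : ContDiff ℝ (⊤ : ℕ∞) ψ) (hg : GPeq c ψ) (hE : FiniteEnergy ψ)
    (hlim : Tendsto ψ (cocompact (Ed 3)) (𝓝 1)) (hI : |lagr c ψ| ≤ C) (hM0 : 0 ≤ M)
    (hM : volume (Sset ψ r) ≤ ENNReal.ofReal M) :
    energy ψ ≤ C + (C + 2 * errB q r M) / (1 - θ) := by
  have h2 := Real.sq_sqrt (show (0 : ℝ) ≤ 2 by norm_num)
  have hcsq : c ^ 2 ≤ 2 := by rw [← h2]; gcongr
  have hgr : ∀ j x, ‖pd ψ j x‖ ^ 2 ≤ 2025 := fun j x =>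
    (Finset.single_le_sum (f := fun i => ‖pd ψ i x‖ ^ 2) (fun i _ => by positivity)
      (Finset.mem_univ j)).trans (grad_bound hcsq h hg (norm_sq_le hcsq h hg hlim) x)
  have hC0 : 0 ≤ C := (abs_nonneg _).trans hI
  have hB0 : 0 ≤ errB q r M := by
    have : 0 < r - q := by linarith
    unfold errB; positivity
  have hθ' : 0 < 1 - θ := by linarith
  have hI' : energy ψ - c * mom ψ ≤ C := (le_abs_self _).trans hI
  by_cases hi : Integrable fun x => (pd ψ 0 x).im * ((ψ x).re - 1)
  · have hm := mom_le hq hqr hr h hgr hlim hE hM0 hM hi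
    have hEn : 0 ≤ energy ψ := integral_nonneg fun x => eDen_nonneg ψ x
    have hc' : c ≤ 2 := by nlinarith
    have h3 : c * mom ψ ≤ θ * energy ψ + 2 * errB q r M := by
      calc c * mom ψ ≤ c * (energy ψ / (Real.sqrt 2 * q) + errB q r M) := by gcongr
        _ = c / (Real.sqrt 2 * q) * energy ψ + c * errB q r M := by ring
        _ ≤ _ := by gcongr
    have h4 : energy ψ ≤ (C + 2 * errB q r M) / (1 - θ) := by
      rw [le_div_iff₀ hθ']; linarith
    linarith
  · -- With a non-integrable density, the Bochner integral defining the momentum is zero.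
    have hm : mom ψ = 0 := by rw [mom, integral_undef hi, neg_zero]
    rw [hm] at hI'
    have : 0 ≤ (C + 2 * errB q r M) / (1 - θ) := by positivity
    linarith

end Aux

/-- if the energies blow up then the measure of the sets
`S_n^r = {|ψ_n| < r}` tends to infinity, for every `r ∈ (c/√2, 1)`. -/
theorem statement16 (c : ℝ) (hc : c ∈ Set.Ioo 0 (Real.sqrt 2))
    (cn : ℕ → ℝ) (hcn : ∀ n, cn n ∈ Set.Ioo 0 (Real.sqrt 2))
    (hclim : Tendsto cn atTop (𝓝 c))
    (ψn : ℕ → Ed 3 → ℂ)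
    (hsol : ∀ n, ContDiff ℝ (⊤ : ℕ∞) (ψn n) ∧ GPeq (cn n) (ψn n) ∧
      FiniteEnergy (ψn n) ∧ Nontriv (ψn n) ∧
      Tendsto (ψn n) (cocompact (Ed 3)) (𝓝 1))
    (C : ℝ) (hI : ∀ n, |lagr (cn n) (ψn n)| ≤ C)
    (hE : Tendsto (fun n => energy (ψn n)) atTop atTop) :
    ∀ r : ℝ, c / Real.sqrt 2 < r → r < 1 →
      Tendsto (fun n => volume (Sset (ψn n) r)) atTop (𝓝 ⊤) := by
  intro r hcr hr
  have hs2 : 0 < Real.sqrt 2 := by positivity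
  obtain ⟨q, hq1, hqr⟩ := exists_between hcr
  have hq : 0 < q := (div_pos hc.1 hs2).trans hq1
  have hlt : c / (Real.sqrt 2 * q) < 1 := by
    rw [div_lt_one (by positivity)]
    rw [div_lt_iff₀ hs2] at hq1
    linarith
  obtain ⟨θ, hθ, hθ1⟩ := exists_between hlt
  have hev : ∀ᶠ n in atTop, cn n / (Real.sqrt 2 * q) < θ :=
    (hclim.div_const (Real.sqrt 2 * q)).eventually (gt_mem_nhds hθ)
  rw [ENNReal.tendsto_nhds_top_iff_nnreal]
  intro M
  filter_upwards [hev, hE.eventually_gt_atTop (C + (C + 2 * errB q r M) / (1 - θ))] with n h1 h2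
  by_contra hM
  obtain ⟨hs, hg, hfe, -, hlim⟩ := hsol n
  have := energy_le hq hqr hr (hcn n).1 (hcn n).2 h1.le hθ1 hs hg hfe hlim (hI n)
    M.coe_nonneg (by rw [ENNReal.ofReal_coe_nnreal]; exact not_lt.1 hM)
  exact absurd h2 (not_lt.2 this)
end
end

section
/- Let d ∈ {2,3}, c > 0, t ∈ ℝ, ω₀ ∈ ℝ and ρ₀ > 0 satisfy ω₀² + c ω₀ + ρ₀² = 1. Then ψ₀(x) = ρ₀ e^{i ω₀ (x₁ − t)} is a smooth (infinite energy) solution of the Gross–Pitaevskii traveling wave equation with speed c on ℝ^d. If in addition ρ₀² < (2/3)(1 + c²/4), then ψ₀ has infinite Morse index: for every m ∈ ℕ there exists an m-dimensional vector subspace Y of C_c^∞(ℝ^d, ℂ) such that Q(φ) < 0 for every nonzero φ ∈ Y. -/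
/-!
The plane wave solves the equation because each derivative in `x₁` multiplies it by `iω₀` and
`ω₀² + c ω₀ + ρ₀² = 1`.

For the Morse index, write `φ = e^{iω₀(x₁ - t)} (a + i b)` with `a`, `b` real and put
`k = 2ω₀ + c`. The relation between `ω₀` and `ρ₀` removes the zeroth-order terms and leaves
`Q(φ) = ∫ |∇a|² + |∇b|² + k (a ∂₁b - b ∂₁a) + 2ρ₀² a²`.
Take `a = α χ sin (κ x₁)` and `b = χ cos (κ x₁)` with a real cutoff `χ`, and add the value of `Q`
at the function obtained from a quarter-period shift of the phase. All oscillating terms cancel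
pointwise (`qDen_add`), and the sum of the two values is
`(α² + 1) ∫ |∇χ|² + ((α² + 1) κ² - 2kκα + 2ρ₀² α²) ∫ χ²`.
The assumption on `ρ₀` says exactly that `2ρ₀² < k²`, and then the second coefficient is negative
for suitable `κ`, `α` (`exists_symbol_neg`). Dilating a bump function makes `∫ |∇χ|²` as small as
needed relative to `∫ χ²` (`exists_cutoff`), so one of the two functions satisfies `Q < 0`
(`exists_negative_function`).

The cutoff can be centred anywhere with a fixed support radius. Centres far apart give `m`
functions with disjoint supports; `Q` is diagonal on their span (`Qform_sum`), hence negative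
definite on a space of dimension `m` (`exists_negative_space`).
-/


open MeasureTheory Filter Complex Metric Topology

noncomputable section

/-! ### The density of the quadratic form and disjoint supports -/

/-- The density of the quadratic form `Qform c ψ`. -/
def qDen {d : ℕ} [NeZero d] (c : ℝ) (ψ φ : Ed d → ℂ) (x : Ed d) : ℝ :=
  gradSq φ x - c * (φ x * (starRingEnd ℂ) (Complex.I * pd φ 0 x)).re
    - (1 - ‖ψ x‖ ^ 2) * ‖φ x‖ ^ 2 + 2 * ((φ x * (starRingEnd ℂ) (ψ x)).re) ^ 2

lemma Qform_eq {d : ℕ} [NeZero d] (c : ℝ) (ψ φ : Ed d → ℂ) :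
    Qform c ψ φ = ∫ x, qDen c ψ φ x := rfl

lemma pd_congr {d : ℕ} {f g : Ed d → ℂ} {x : Ed d} (h : f =ᶠ[𝓝 x] g) (i : Fin d) :
    pd f i x = pd g i x := by
  simp only [pd, h.fderiv_eq]

lemma qDen_congr {d : ℕ} [NeZero d] (c : ℝ) (ψ : Ed d → ℂ) {f g : Ed d → ℂ} {x : Ed d}
    (h : f =ᶠ[𝓝 x] g) : qDen c ψ f x = qDen c ψ g x := by
  simp only [qDen, gradSq, pd_congr h, h.eq_of_nhds]

lemma qDen_smul {d : ℕ} [NeZero d] (c : ℝ) (ψ : Ed d → ℂ) (f : Ed d → ℂ) (a : ℝ) (x : Ed d) :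
    qDen c ψ (a • f) x = a ^ 2 * qDen c ψ f x := by
  have h : ∀ i, pd (a • f) i x = a * pd f i x := by
    intro i
    simp [pd, fderiv_const_smul_field]
  simp only [qDen, gradSq, h, Pi.smul_apply, Complex.real_smul, norm_mul, mul_pow,
    ← Finset.mul_sum, Complex.norm_real, Real.norm_eq_abs, sq_abs]
  simp only [map_mul, Complex.mul_re, Complex.mul_im, Complex.conj_re, Complex.conj_im,
    Complex.ofReal_re, Complex.ofReal_im, Complex.I_re, Complex.I_im]
  ring

lemma qDen_zero {d : ℕ} [NeZero d] (c : ℝ) (ψ : Ed d → ℂ) (x : Ed d) :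
    qDen c ψ 0 x = 0 := by
  simpa using qDen_smul c ψ 0 0 x

lemma continuous_pd {d : ℕ} {φ : Ed d → ℂ} (h : ContDiff ℝ (⊤ : ℕ∞) φ) (i : Fin d) :
    Continuous (pd φ i) :=
  (h.continuous_fderiv (by simp)).clm_apply continuous_const

lemma integrable_qDen {d : ℕ} [NeZero d] (c : ℝ) {ψ φ : Ed d → ℂ} (hψ : Continuous ψ)
    (h : ContDiff ℝ (⊤ : ℕ∞) φ) (hs : HasCompactSupport φ) : Integrable (qDen c ψ φ) := by
  have h1 := h.continuous
  have h2 := continuous_pd h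
  refine Continuous.integrable_of_hasCompactSupport ?_ ?_
  · unfold qDen gradSq
    refine ((Continuous.sub ?_ ?_).sub ?_).add ?_
    · exact continuous_finsetSum _ fun i _ => ((h2 i).norm).pow 2
    · exact continuous_const.mul (Complex.continuous_re.comp
        (h1.mul (Complex.continuous_conj.comp (continuous_const.mul (h2 0)))))
    · fun_prop
    · exact continuous_const.mul ((Complex.continuous_re.comp
        (h1.mul (Complex.continuous_conj.comp hψ))).pow 2)
  · refine HasCompactSupport.intro hs fun x hx => ?_
    rw [qDen_congr c ψ (notMem_tsupport_iff_eventuallyEq.mp hx), qDen_zero]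

/-- Functions with disjoint supports are orthogonal for the quadratic form. -/
lemma Qform_sum {d : ℕ} [NeZero d] (c : ℝ) {ψ : Ed d → ℂ} (hψ : Continuous ψ) {m : ℕ}
    (φ : Fin m → Ed d → ℂ) (h : ∀ j, ContDiff ℝ (⊤ : ℕ∞) (φ j))
    (hs : ∀ j, HasCompactSupport (φ j))
    (hd : Pairwise fun i j => Disjoint (tsupport (φ i)) (tsupport (φ j))) (a : Fin m → ℝ) :
    Qform c ψ (∑ j, a j • φ j) = ∑ j, a j ^ 2 * Qform c ψ (φ j) := by
  have key : ∀ x, qDen c ψ (∑ j, a j • φ j) x = ∑ j, a j ^ 2 * qDen c ψ (φ j) x := by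
    intro x
    have off : ∀ j, x ∉ tsupport (φ j) → φ j =ᶠ[𝓝 x] 0 := fun j hj =>
      notMem_tsupport_iff_eventuallyEq.mp hj
    by_cases hx : ∃ j, x ∈ tsupport (φ j)
    · obtain ⟨j, hj⟩ := hx
      have hne : ∀ i, i ≠ j → φ i =ᶠ[𝓝 x] 0 := fun i hi =>
        off i (Set.disjoint_right.mp (hd hi) hj)
      have e : (∑ i, a i • φ i) =ᶠ[𝓝 x] a j • φ j := by
        have : ∀ᶠ y in 𝓝 x, ∀ i, i ≠ j → φ i y = 0 := by
          rw [eventually_all]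
          intro i
          by_cases hi : i = j
          · simp [hi]
          · filter_upwards [hne i hi] with y hy _ using hy
        filter_upwards [this] with y hy
        rw [Finset.sum_apply, Finset.sum_eq_single j]
        · intro i _ hi
          simp [hy i hi]
        · simp
      rw [qDen_congr c ψ e, qDen_smul, Finset.sum_eq_single j]
      · intro i _ hi
        rw [qDen_congr c ψ (hne i hi), qDen_zero, mul_zero]
      · simp
    · push Not at hx
      have e : (∑ i, a i • φ i) =ᶠ[𝓝 x] 0 := by
        have : ∀ᶠ y in 𝓝 x, ∀ i, φ i y = 0 := by
          rw [eventually_all]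
          exact fun i => off i (hx i)
        filter_upwards [this] with y hy
        simp [hy]
      rw [qDen_congr c ψ e, qDen_zero]
      refine (Finset.sum_eq_zero fun i _ => ?_).symm
      rw [qDen_congr c ψ (off i (hx i)), qDen_zero, mul_zero]
  simp_rw [Qform_eq, key]
  rw [integral_finsetSum _ fun j _ => (integrable_qDen c hψ (h j) (hs j)).const_mul _]
  simp_rw [integral_const_mul]

/-- Disjointly supported functions on which the form is negative span a space on which it is
negative definite; applied to a vanishing combination, negativity also gives independence. -/
lemma exists_negative_space {d : ℕ} [NeZero d] (c : ℝ) {ψ : Ed d → ℂ} (hψ : Continuous ψ) {m : ℕ}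
    (φ : Fin m → Ed d → ℂ) (h : ∀ j, ContDiff ℝ (⊤ : ℕ∞) (φ j))
    (hs : ∀ j, HasCompactSupport (φ j))
    (hd : Pairwise fun i j => Disjoint (tsupport (φ i)) (tsupport (φ j)))
    (hneg : ∀ j, Qform c ψ (φ j) < 0) :
    ∃ Y : Submodule ℝ (Ed d → ℂ),
      (∀ φ ∈ Y, ContDiff ℝ (⊤ : ℕ∞) φ ∧ HasCompactSupport φ) ∧
      Module.finrank ℝ Y = m ∧ ∀ φ ∈ Y, φ ≠ 0 → Qform c ψ φ < 0 := by
  have hQ := Qform_sum c hψ φ h hs hd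
  have hle : ∀ (a : Fin m → ℝ) j, a j ^ 2 * Qform c ψ (φ j) ≤ 0 := fun a j =>
    mul_nonpos_of_nonneg_of_nonpos (sq_nonneg _) (hneg j).le
  have hQ0 : ∀ a : Fin m → ℝ, a ≠ 0 → Qform c ψ (∑ j, a j • φ j) < 0 := by
    intro a ha
    obtain ⟨j, hj⟩ := Function.ne_iff.mp ha
    rw [hQ]
    exact Finset.sum_neg' (fun i _ => hle a i)
      ⟨j, Finset.mem_univ _, mul_neg_of_pos_of_neg (sq_pos_of_ne_zero hj) (hneg j)⟩
  have hli : LinearIndependent ℝ φ := by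
    rw [Fintype.linearIndependent_iff]
    intro a ha
    by_contra! hcon
    have h1 := hQ0 a (fun h0 => by obtain ⟨i, hi⟩ := hcon; exact hi (by simp [h0]))
    have h2 : Qform c ψ 0 = 0 := by
      simp [Qform_eq, qDen_zero]
    rw [ha, h2] at h1
    exact lt_irrefl _ h1
  refine ⟨Submodule.span ℝ (Set.range φ), ?_, ?_, ?_⟩
  · intro f hf
    induction hf using Submodule.span_induction with
    | mem x hx => obtain ⟨j, rfl⟩ := hx; exact ⟨h j, hs j⟩
    | zero => exact ⟨contDiff_const, HasCompactSupport.zero⟩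
    | add x y _ _ hx hy => exact ⟨hx.1.add hy.1, hx.2.add hy.2⟩
    | smul a x _ hx =>
      exact ⟨contDiff_const.smul hx.1, hx.2.smul_left (f := fun _ => a)⟩
  · rw [finrank_span_eq_card hli, Fintype.card_fin]
  · intro f hf hf0
    obtain ⟨a, rfl⟩ := (Submodule.mem_span_range_iff_exists_fun ℝ).mp hf
    exact hQ0 a (fun h0 => hf0 (by simp [h0]))

/-! ### Cutoff functions with small Dirichlet energy -/

/-- By dilation, the Dirichlet energy of a cutoff can be made small relative to its `L²` norm;
the radius of the support does not depend on the centre. -/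
lemma exists_cutoff (d : ℕ) {ε : ℝ} (hε : 0 < ε) : ∃ r > 0, ∀ p : Ed d, ∃ χ : Ed d → ℝ,
    ContDiff ℝ (⊤ : ℕ∞) χ ∧ tsupport χ ⊆ closedBall p r ∧
    ∫ x, ∑ i, (fderiv ℝ χ x (EuclideanSpace.single i 1)) ^ 2 < ε * ∫ x, χ x ^ 2 := by
  let f : ContDiffBump (0 : Ed d) := ⟨1, 2, by norm_num, by norm_num⟩
  have hfs : ContDiff ℝ (⊤ : ℕ∞) f := f.contDiff
  have hA : 0 < ∫ x, f x ^ 2 := by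
    refine Continuous.integral_pos_of_hasCompactSupport_nonneg_nonzero (x := 0)
      (by have := f.continuous; fun_prop) ?_ (fun x => sq_nonneg _) ?_
    · exact f.hasCompactSupport.comp_left (g := fun y : ℝ => y ^ 2) (by simp)
    · have : f 0 = 1 := f.one_of_mem_closedBall (by simp [f])
      simp [this]
  set A := ∫ x, f x ^ 2 with hAdef
  set B := ∫ x, ∑ i, (fderiv ℝ f x (EuclideanSpace.single i 1)) ^ 2 with hBdef
  have hB : 0 ≤ B := integral_nonneg fun x => Finset.sum_nonneg fun i _ => sq_nonneg _
  -- a dilation factor `R⁻¹ = s` with `s² B < ε A`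
  obtain ⟨s, hs0, hs⟩ : ∃ s : ℝ, 0 < s ∧ s ^ 2 * B < ε * A := by
    have hpos : 0 < ε * A / (B + 1) := div_pos (mul_pos hε hA) (by positivity)
    refine ⟨√(ε * A / (B + 1)), Real.sqrt_pos.mpr hpos, ?_⟩
    rw [Real.sq_sqrt hpos.le, div_mul_eq_mul_div, div_lt_iff₀ (by positivity)]
    nlinarith [mul_pos hε hA]
  refine ⟨2 / s, by positivity, fun p => ⟨fun x => f (s • (x - p)), ?_, ?_, ?_⟩⟩
  · exact hfs.comp (by fun_prop)
  · refine closure_minimal (fun x hx => ?_) isClosed_closedBall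
    have h1 : s • (x - p) ∈ ball (0 : Ed d) 2 := by
      have := f.support_eq
      rw [← show f.rOut = 2 from rfl, ← this]
      exact hx
    rw [mem_ball_zero_iff, norm_smul, Real.norm_eq_abs, abs_of_pos hs0] at h1
    rw [mem_closedBall, dist_eq_norm, le_div_iff₀ hs0]
    linarith
  · have hder : ∀ x v, fderiv ℝ (fun x => f (s • (x - p))) x v
        = s * fderiv ℝ f (s • (x - p)) v := by
      intro x v
      have h1 : HasFDerivAt (fun x : Ed d => s • (x - p)) (s • ContinuousLinearMap.id ℝ (Ed d)) x :=
        ((hasFDerivAt_id x).sub_const p).const_smul s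
      have h2 := ((hfs.differentiable (by simp)) (s • (x - p))).hasFDerivAt.comp x h1
      change fderiv ℝ (f ∘ fun x => s • (x - p)) x v = _
      rw [h2.fderiv]
      simp
    have chg : ∀ g : Ed d → ℝ, ∫ x, g (s • (x - p)) = |(s ^ d)⁻¹| * ∫ x, g x := by
      intro g
      rw [integral_sub_right_eq_self (fun x => g (s • x)) p, Measure.integral_comp_smul]
      simp
    simp_rw [hder, mul_pow, ← Finset.mul_sum]
    rw [integral_const_mul,
      chg (fun y => ∑ i, (fderiv ℝ f y (EuclideanSpace.single i 1)) ^ 2),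
      chg (fun y => f y ^ 2), ← hAdef, ← hBdef]
    have : 0 < |(s ^ d)⁻¹| := abs_pos.mpr (inv_ne_zero (pow_ne_zero _ hs0.ne'))
    nlinarith

/-! ### Products of a cutoff and a profile in the first variable -/

lemma pd_mul_profile {d : ℕ} [NeZero d] {χ : Ed d → ℝ} {W : ℝ → ℂ} {W' : ℂ} {x : Ed d}
    (hχ : DifferentiableAt ℝ χ x) (hW : HasDerivAt W W' (x 0)) (i : Fin d) :
    pd (fun x => (χ x : ℂ) * W (x 0)) i x
      = (fderiv ℝ χ x (EuclideanSpace.single i 1) : ℝ) * W (x 0)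
        + if i = 0 then (χ x : ℂ) * W' else 0 := by
  have h0 : HasFDerivAt (fun x : Ed d => x 0) (EuclideanSpace.proj 0 : Ed d →L[ℝ] ℝ) x :=
    (EuclideanSpace.proj 0 : Ed d →L[ℝ] ℝ).hasFDerivAt
  have h1 := hW.hasFDerivAt.comp x h0
  have h2 : HasFDerivAt (fun x => (χ x : ℂ)) (Complex.ofRealCLM.comp (fderiv ℝ χ x)) x :=
    Complex.ofRealCLM.hasFDerivAt.comp x hχ.hasFDerivAt
  have h3 := h2.mul h1
  rw [pd, show fderiv ℝ (fun x => (χ x : ℂ) * W (x 0)) x = _ from h3.fderiv]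
  by_cases hi : i = 0
  · subst hi
    simp
    ring
  · simp [hi, Ne.symm hi]
    ring

lemma gradSq_mul_profile {d : ℕ} [NeZero d] {χ : Ed d → ℝ} {W : ℝ → ℂ} {W' : ℂ} {x : Ed d}
    (hχ : DifferentiableAt ℝ χ x) (hW : HasDerivAt W W' (x 0)) :
    gradSq (fun x => (χ x : ℂ) * W (x 0)) x
      = (∑ i, (fderiv ℝ χ x (EuclideanSpace.single i 1)) ^ 2) * ‖W (x 0)‖ ^ 2
        + 2 * fderiv ℝ χ x (EuclideanSpace.single 0 1) * χ x
            * (W (x 0) * (starRingEnd ℂ) W').re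
        + χ x ^ 2 * ‖W'‖ ^ 2 := by
  have : ∀ i, ‖pd (fun x => (χ x : ℂ) * W (x 0)) i x‖ ^ 2
      = (fderiv ℝ χ x (EuclideanSpace.single i 1)) ^ 2 * ‖W (x 0)‖ ^ 2
        + if i = 0 then 2 * fderiv ℝ χ x (EuclideanSpace.single 0 1) * χ x
            * (W (x 0) * (starRingEnd ℂ) W').re + χ x ^ 2 * ‖W'‖ ^ 2 else 0 := by
    intro i
    rw [pd_mul_profile hχ hW]
    by_cases hi : i = 0
    · subst hi
      simp only [if_true, ← Complex.normSq_eq_norm_sq, Complex.normSq_apply, Complex.add_re,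
        Complex.add_im, Complex.mul_re, Complex.mul_im, Complex.ofReal_re, Complex.ofReal_im,
        Complex.conj_re, Complex.conj_im]
      ring
    · simp [hi, mul_pow]
  simp only [gradSq, this, Finset.sum_add_distrib, ← Finset.sum_mul]
  simp [add_assoc]

/-! ### Oscillating test functions -/

/-- The one-dimensional profile `e^{iω(s-t)} (α sin (κ s) + i cos (κ s))`. -/
def prof (ω t κ α s : ℝ) : ℂ :=
  Complex.exp (Complex.I * (ω : ℂ) * ((s - t : ℝ) : ℂ))
    * (⟨α * Real.sin (κ * s), Real.cos (κ * s)⟩ : ℂ)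

/-- The quarter-period translate `e^{iω(s-t)} (α cos (κ s) - i sin (κ s))` of `prof`. -/
def prof' (ω t κ α s : ℝ) : ℂ :=
  Complex.exp (Complex.I * (ω : ℂ) * ((s - t : ℝ) : ℂ))
    * (⟨α * Real.cos (κ * s), -Real.sin (κ * s)⟩ : ℂ)

lemma hasDerivAt_expo (ω t s : ℝ) :
    HasDerivAt (fun s : ℝ => Complex.exp (Complex.I * (ω : ℂ) * ((s - t : ℝ) : ℂ)))
      (Complex.exp (Complex.I * (ω : ℂ) * ((s - t : ℝ) : ℂ)) * (Complex.I * ω)) s := by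
  have h1 : HasDerivAt (fun s : ℝ => ((s - t : ℝ) : ℂ)) 1 s := by
    simpa using ((hasDerivAt_id s).sub_const t).ofReal_comp
  simpa using (h1.const_mul (Complex.I * (ω : ℂ))).cexp

lemma hasDerivAt_mk {f g : ℝ → ℝ} {f' g' s : ℝ} (hf : HasDerivAt f f' s)
    (hg : HasDerivAt g g' s) :
    HasDerivAt (fun s => (⟨f s, g s⟩ : ℂ)) ⟨f', g'⟩ s := by
  have h := hf.ofReal_comp.add (hg.ofReal_comp.mul_const Complex.I)
  simp only [Complex.mk_eq_add_mul_I]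
  exact h

lemma hasDerivAt_prof (ω t κ α s : ℝ) : HasDerivAt (prof ω t κ α)
    (Complex.I * ω * prof ω t κ α s + κ * prof' ω t κ α s) s := by
  have hk : HasDerivAt (fun s => κ * s) κ s := by simpa using (hasDerivAt_id s).const_mul κ
  have h := (hasDerivAt_expo ω t s).mul
    (hasDerivAt_mk (hk.sin.const_mul α) hk.cos)
  refine h.congr_deriv ?_
  simp only [prof, prof', Complex.mk_eq_add_mul_I]
  push_cast
  ring

lemma hasDerivAt_prof' (ω t κ α s : ℝ) : HasDerivAt (prof' ω t κ α)
    (Complex.I * ω * prof' ω t κ α s - κ * prof ω t κ α s) s := by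
  have hk : HasDerivAt (fun s => κ * s) κ s := by simpa using (hasDerivAt_id s).const_mul κ
  have hn : HasDerivAt (fun s => -Real.sin (κ * s)) (-(Real.cos (κ * s) * κ)) s := hk.sin.neg
  have h := (hasDerivAt_expo ω t s).mul (hasDerivAt_mk (hk.cos.const_mul α) hn)
  refine h.congr_deriv ?_
  simp only [prof, prof', Complex.mk_eq_add_mul_I]
  push_cast
  ring

lemma contDiff_expo (ω t : ℝ) : ContDiff ℝ (⊤ : ℕ∞)
    (fun s : ℝ => Complex.exp (Complex.I * (ω : ℂ) * ((s - t : ℝ) : ℂ))) := by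
  have : ContDiff ℝ (⊤ : ℕ∞) (fun s : ℝ => ((s - t : ℝ) : ℂ)) :=
    Complex.ofRealCLM.contDiff.comp (contDiff_id.sub contDiff_const)
  exact (contDiff_const.mul this).cexp

lemma contDiff_mk {f g : ℝ → ℝ} (hf : ContDiff ℝ (⊤ : ℕ∞) f) (hg : ContDiff ℝ (⊤ : ℕ∞) g) :
    ContDiff ℝ (⊤ : ℕ∞) (fun s => (⟨f s, g s⟩ : ℂ)) := by
  simp only [Complex.mk_eq_add_mul_I]
  exact (Complex.ofRealCLM.contDiff.comp hf).add
    ((Complex.ofRealCLM.contDiff.comp hg).mul contDiff_const)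

lemma contDiff_prof (ω t κ α : ℝ) : ContDiff ℝ (⊤ : ℕ∞) (prof ω t κ α) :=
  (contDiff_expo ω t).mul (contDiff_mk (by fun_prop) (by fun_prop))

lemma contDiff_prof' (ω t κ α : ℝ) : ContDiff ℝ (⊤ : ℕ∞) (prof' ω t κ α) :=
  (contDiff_expo ω t).mul (contDiff_mk (by fun_prop) (by fun_prop))

lemma contDiff_coord {d : ℕ} [NeZero d] : ContDiff ℝ (⊤ : ℕ∞) (fun x : Ed d => x 0) :=
  (EuclideanSpace.proj 0 : Ed d →L[ℝ] ℝ).contDiff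

/-- The oscillating terms cancel in the sum of the densities at the two quarter-period
translates. -/
lemma qDen_add {d : ℕ} [NeZero d] {c t ω ρ : ℝ} (hrel : ω ^ 2 + c * ω + ρ ^ 2 = 1) (κ α : ℝ)
    {χ : Ed d → ℝ} {x : Ed d} (hχ : DifferentiableAt ℝ χ x) :
    qDen c (fun x => (ρ : ℂ) * Complex.exp (Complex.I * (ω : ℂ) * ((x 0 - t : ℝ) : ℂ)))
        (fun x => (χ x : ℂ) * prof ω t κ α (x 0)) x
      + qDen c (fun x => (ρ : ℂ) * Complex.exp (Complex.I * (ω : ℂ) * ((x 0 - t : ℝ) : ℂ)))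
        (fun x => (χ x : ℂ) * prof' ω t κ α (x 0)) x
      = (α ^ 2 + 1) * (∑ i, (fderiv ℝ χ x (EuclideanSpace.single i 1)) ^ 2)
        + ((α ^ 2 + 1) * κ ^ 2 - 2 * (2 * ω + c) * κ * α + 2 * ρ ^ 2 * α ^ 2) * χ x ^ 2 := by
  have hp := hasDerivAt_prof ω t κ α (x 0)
  have hp' := hasDerivAt_prof' ω t κ α (x 0)
  simp only [qDen, gradSq_mul_profile hχ hp, gradSq_mul_profile hχ hp', pd_mul_profile hχ hp,
    pd_mul_profile hχ hp']
  have hE : ‖Complex.exp (Complex.I * (ω : ℂ) * ((x 0 - t : ℝ) : ℂ))‖ = 1 := by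
    rw [show Complex.I * (ω : ℂ) * ((x 0 - t : ℝ) : ℂ) = ((ω * (x 0 - t) : ℝ) : ℂ) * Complex.I by
      push_cast; ring]
    exact Complex.norm_exp_ofReal_mul_I _
  simp only [prof, prof', if_true]
  set E := Complex.exp (Complex.I * (ω : ℂ) * ((x 0 - t : ℝ) : ℂ))
  have hEE : E * (starRingEnd ℂ) E = 1 := by
    rw [Complex.mul_conj, Complex.normSq_eq_norm_sq, hE]; simp
  have hconj : ∀ z w : ℂ, (E * z) * (starRingEnd ℂ) (E * w) = z * (starRingEnd ℂ) w := by
    intro z w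
    rw [map_mul]
    linear_combination z * (starRingEnd ℂ) w * hEE
  have hn : ∀ z : ℂ, ‖E * z‖ ^ 2 = ‖z‖ ^ 2 := by
    intro z; rw [norm_mul, hE, one_mul]
  have hsc : Real.sin (κ * x 0) ^ 2 + Real.cos (κ * x 0) ^ 2 = 1 := Real.sin_sq_add_cos_sq _
  set S := Real.sin (κ * x 0)
  set C := Real.cos (κ * x 0)
  generalize (∑ i, (fderiv ℝ χ x (EuclideanSpace.single i 1)) ^ 2) = G
  generalize fderiv ℝ χ x (EuclideanSpace.single 0 1) = g
  generalize χ x = y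
  -- every term is of the form `E * z`, so that the phase drops out
  have r1 : ∀ z w : ℂ, Complex.I * ω * (E * z) + κ * (E * w) = E * (Complex.I * ω * z + κ * w) := by
    intros; ring
  have r2 : ∀ z w : ℂ, Complex.I * ω * (E * z) - κ * (E * w) = E * (Complex.I * ω * z - κ * w) := by
    intros; ring
  have r3 : ∀ z : ℂ, (y : ℂ) * (E * z) = E * (y * z) := by intros; ring
  have r4 : ∀ z w : ℂ, Complex.I * ((g : ℂ) * (E * z) + E * w) = E * (Complex.I * (g * z + w)) := by
    intros; ring
  have r5 : (ρ : ℂ) * E = E * ρ := by ring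
  simp only [r1, r2, r3, r4, r5, hn, hconj]
  simp only [← Complex.normSq_eq_norm_sq, Complex.normSq_apply, Complex.add_re, Complex.sub_re,
        Complex.add_im, Complex.sub_im, Complex.mul_re, Complex.mul_im, Complex.ofReal_re,
        Complex.ofReal_im, Complex.conj_re, Complex.conj_im, Complex.I_re, Complex.I_im]
  linear_combination ((α ^ 2 + 1) * G + ((α ^ 2 + 1) * κ ^ 2 - 2 * (2 * ω + c) * κ * α
    + 2 * ρ ^ 2 * α ^ 2) * y ^ 2) * hsc + (α ^ 2 + 1) * y ^ 2 * (S ^ 2 + C ^ 2) * hrel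

/-! ### Negative directions -/

/-- The reduced symbol takes a negative value as soon as `2ρ² < k²`. -/
lemma exists_symbol_neg {k ρ : ℝ} (hρ : 0 < ρ) (h : 2 * ρ ^ 2 < k ^ 2) : ∃ κ α : ℝ,
    (α ^ 2 + 1) * κ ^ 2 - 2 * k * κ * α + 2 * ρ ^ 2 * α ^ 2 < 0 := by
  have hk : 0 < k ^ 2 := lt_trans (by positivity) h
  have hD : 0 < k ^ 2 / (2 * ρ ^ 2) - 1 := by
    rw [sub_pos, lt_div_iff₀ (by positivity)]; linarith
  -- `α = κ μ` with `μ = k / (2ρ²)` minimises `-2kκα + 2ρ²α²`; the only other term in `α`,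
  -- `α²κ²`, is of order `κ⁴`
  set μ := k / (2 * ρ ^ 2) with hμ
  have hμk : k * μ = k ^ 2 / (2 * ρ ^ 2) := by rw [hμ]; ring
  have hμρ : 2 * ρ ^ 2 * μ = k := by rw [hμ]; field_simp
  have hμ0 : 0 < μ ^ 2 := by rw [hμ, div_pow]; positivity
  have hpos : 0 < (k * μ - 1) / (2 * μ ^ 2) := by rw [hμk]; positivity
  refine ⟨√((k * μ - 1) / (2 * μ ^ 2)), √((k * μ - 1) / (2 * μ ^ 2)) * μ, ?_⟩
  set κ := √((k * μ - 1) / (2 * μ ^ 2))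
  have hκ : κ ^ 2 = (k * μ - 1) / (2 * μ ^ 2) := Real.sq_sqrt hpos.le
  have hκ0 : 0 < κ ^ 2 := by rw [hκ]; exact hpos
  have hμne : μ ≠ 0 := fun h0 => by simp [h0] at hμ0
  have hκμ : κ ^ 2 * μ ^ 2 = (k * μ - 1) / 2 := by rw [hκ]; field_simp
  -- `κ` was chosen so that `κ²μ²` is half of `kμ - 1 > 0`
  have e : ((κ * μ) ^ 2 + 1) * κ ^ 2 - 2 * k * κ * (κ * μ) + 2 * ρ ^ 2 * (κ * μ) ^ 2
      = κ ^ 2 * (-((k * μ - 1) / 2)) := by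
    linear_combination κ ^ 2 * hκμ + κ ^ 2 * μ * hμρ
  rw [e]
  have : 0 < k * μ - 1 := by rw [hμk]; exact hD
  nlinarith

lemma integrable_sq {d : ℕ} {χ : Ed d → ℝ} (hχ : ContDiff ℝ (⊤ : ℕ∞) χ)
    (hs : HasCompactSupport χ) : Integrable (fun x => χ x ^ 2) := by
  have hc := hχ.continuous
  refine Continuous.integrable_of_hasCompactSupport (by fun_prop) ?_
  exact HasCompactSupport.intro hs fun x hx => by simp [image_eq_zero_of_notMem_tsupport hx]

lemma integrable_grad_sq {d : ℕ} {χ : Ed d → ℝ} (hχ : ContDiff ℝ (⊤ : ℕ∞) χ)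
    (hs : HasCompactSupport χ) :
    Integrable (fun x => ∑ i, (fderiv ℝ χ x (EuclideanSpace.single i 1)) ^ 2) := by
  refine Continuous.integrable_of_hasCompactSupport ?_ ?_
  · exact continuous_finsetSum _ fun i _ =>
      ((hχ.continuous_fderiv (by simp)).clm_apply continuous_const).pow 2
  · exact HasCompactSupport.intro hs fun x hx => by
      simp [(notMem_tsupport_iff_eventuallyEq.mp hx).fderiv_eq]

/-- If the gradient term is small enough, one of the two phase-shifted test functions built on
the cutoff `χ` is a negative direction, since the sum of their two values is negative. -/
lemma exists_negative_function {d : ℕ} [NeZero d] {c t ω ρ : ℝ}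
    (hrel : ω ^ 2 + c * ω + ρ ^ 2 = 1) {κ α : ℝ} {χ : Ed d → ℝ}
    (hχ : ContDiff ℝ (⊤ : ℕ∞) χ) (hs : HasCompactSupport χ)
    (hneg : (α ^ 2 + 1) * ∫ x, ∑ i, (fderiv ℝ χ x (EuclideanSpace.single i 1)) ^ 2
      < -((α ^ 2 + 1) * κ ^ 2 - 2 * (2 * ω + c) * κ * α + 2 * ρ ^ 2 * α ^ 2) * ∫ x, χ x ^ 2) :
    ∃ φ : Ed d → ℂ, ContDiff ℝ (⊤ : ℕ∞) φ ∧ tsupport φ ⊆ tsupport χ ∧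
      Qform c (fun x => (ρ : ℂ) * Complex.exp (Complex.I * (ω : ℂ) * ((x 0 - t : ℝ) : ℂ))) φ
        < 0 := by
  have hχ' : ContDiff ℝ (⊤ : ℕ∞) (fun x => (χ x : ℂ)) := Complex.ofRealCLM.contDiff.comp hχ
  have h1 : ContDiff ℝ (⊤ : ℕ∞) (fun x : Ed d => (χ x : ℂ) * prof ω t κ α (x 0)) :=
    hχ'.mul ((contDiff_prof ω t κ α).comp contDiff_coord)
  have h2 : ContDiff ℝ (⊤ : ℕ∞) (fun x : Ed d => (χ x : ℂ) * prof' ω t κ α (x 0)) :=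
    hχ'.mul ((contDiff_prof' ω t κ α).comp contDiff_coord)
  have supp : ∀ W : Ed d → ℂ, tsupport (fun x => (χ x : ℂ) * W x) ⊆ tsupport χ := by
    intro W
    refine closure_mono fun x hx => ?_
    rw [Function.mem_support] at hx ⊢
    intro h0
    simp [h0] at hx
  have hψ : Continuous
      (fun x : Ed d => (ρ : ℂ) * Complex.exp (Complex.I * (ω : ℂ) * ((x 0 - t : ℝ) : ℂ))) := by
    fun_prop
  have cs : ∀ W : Ed d → ℂ, HasCompactSupport (fun x => (χ x : ℂ) * W x) := fun W =>
    hs.of_isClosed_subset (isClosed_tsupport _) (supp W)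
  have i1 := integrable_qDen c hψ h1 (cs fun x => prof ω t κ α (x 0))
  have i2 := integrable_qDen c hψ h2 (cs fun x => prof' ω t κ α (x 0))
  have iχ := integrable_sq hχ hs
  have iG := integrable_grad_sq hχ hs
  have key := integral_add i1 i2
  simp_rw [qDen_add hrel κ α ((hχ.differentiable (by simp)) _)] at key
  rw [integral_add (iG.const_mul _) (iχ.const_mul _), integral_const_mul,
    integral_const_mul] at key
  by_contra! hcon
  have n1 := hcon _ h1 (supp fun x => prof ω t κ α (x 0))
  have n2 := hcon _ h2 (supp fun x => prof' ω t κ α (x 0))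
  rw [Qform_eq] at n1 n2
  linarith

/-! ### The plane wave -/

lemma pd_wave {d : ℕ} [NeZero d] (ω t : ℝ) (A : ℂ) (i : Fin d) (x : Ed d) :
    pd (fun x : Ed d => A * Complex.exp (Complex.I * (ω : ℂ) * ((x 0 - t : ℝ) : ℂ))) i x
      = (if i = 0 then A * (Complex.I * ω) else 0)
        * Complex.exp (Complex.I * (ω : ℂ) * ((x 0 - t : ℝ) : ℂ)) := by
  have h := pd_mul_profile (χ := fun _ => (1 : ℝ)) (differentiableAt_const _)
    ((hasDerivAt_expo ω t (x 0)).const_mul A) i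
  simp only [Complex.ofReal_one, one_mul] at h
  rw [h]
  split_ifs <;> simp
  ring

/-- the circular 1-D profiles `ψ₀(x) = ρ₀ e^{iω₀(x₁ - t)}` with
`ω₀² + cω₀ + ρ₀² = 1` solve the traveling wave equation, and when
`ρ₀² < (2/3)(1 + c²/4)` they have infinite Morse index. -/
theorem statement17 (d : ℕ) [NeZero d] (hd : d = 2 ∨ d = 3) (c : ℝ) (hc : 0 < c)
    (t ω₀ ρ₀ : ℝ) (hρ₀ : 0 < ρ₀) (hrel : ω₀ ^ 2 + c * ω₀ + ρ₀ ^ 2 = 1) :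
    ∀ ψ₀ : Ed d → ℂ,
      (ψ₀ = fun x => (ρ₀ : ℂ) * Complex.exp (Complex.I * (ω₀ : ℂ) * ((x 0 - t : ℝ) : ℂ))) →
      ContDiff ℝ (⊤ : ℕ∞) ψ₀ ∧ GPeq c ψ₀ ∧
      (ρ₀ ^ 2 < 2 / 3 * (1 + c ^ 2 / 4) → ∀ m : ℕ,
        ∃ Y : Submodule ℝ (Ed d → ℂ),
          (∀ φ ∈ Y, ContDiff ℝ (⊤ : ℕ∞) φ ∧ HasCompactSupport φ) ∧
          Module.finrank ℝ Y = m ∧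
          ∀ φ ∈ Y, φ ≠ 0 → Qform c ψ₀ φ < 0) := by
  rintro ψ₀ rfl
  refine ⟨?_, ?_, ?_⟩
  · exact contDiff_const.mul ((contDiff_expo ω₀ t).comp contDiff_coord)
  · intro x
    have hE : ‖Complex.exp (Complex.I * (ω₀ : ℂ) * ((x 0 - t : ℝ) : ℂ))‖ = 1 := by
      rw [show Complex.I * (ω₀ : ℂ) * ((x 0 - t : ℝ) : ℂ)
        = ((ω₀ * (x 0 - t) : ℝ) : ℂ) * Complex.I by push_cast; ring]
      exact Complex.norm_exp_ofReal_mul_I _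
    have hlap : lap (fun x : Ed d =>
        (ρ₀ : ℂ) * Complex.exp (Complex.I * (ω₀ : ℂ) * ((x 0 - t : ℝ) : ℂ))) x
        = (ρ₀ : ℂ) * (Complex.I * ω₀) * (Complex.I * ω₀)
          * Complex.exp (Complex.I * (ω₀ : ℂ) * ((x 0 - t : ℝ) : ℂ)) := by
      change ∑ i, pd (fun y => pd _ i y) i x = _
      simp only [pd_wave]
      rw [Finset.sum_eq_single 0]
      · simp
      · intro i _ hi
        simp [hi]
      · simp
    have hrel' : (ω₀ : ℂ) ^ 2 + c * ω₀ + (ρ₀ : ℂ) ^ 2 = 1 := by exact_mod_cast hrel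
    rw [hlap, pd_wave, norm_mul, hE, Complex.norm_real, Real.norm_of_nonneg hρ₀.le, if_pos rfl]
    push_cast
    linear_combination (-(ρ₀ : ℂ) * Complex.exp (Complex.I * (ω₀ : ℂ) * ((x 0 : ℂ) - t))) * hrel'
      + ((c : ℂ) * ω₀ + ω₀ ^ 2) * ρ₀
        * Complex.exp (Complex.I * (ω₀ : ℂ) * ((x 0 : ℂ) - t)) * Complex.I_sq
  · intro hlt m
    -- the dispersion relation gives `(2ω₀ + c)² = c² + 4 - 4ρ₀²`
    have hk : 2 * ρ₀ ^ 2 < (2 * ω₀ + c) ^ 2 := by nlinarith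
    obtain ⟨κ, α, hsym⟩ := exists_symbol_neg hρ₀ hk
    have hα : 0 < α ^ 2 + 1 := by positivity
    obtain ⟨r, hr, hcut⟩ := exists_cutoff d (div_pos (neg_pos.mpr hsym) hα)
    have hex : ∀ p : Ed d, ∃ φ : Ed d → ℂ, ContDiff ℝ (⊤ : ℕ∞) φ ∧ tsupport φ ⊆ closedBall p r ∧
        Qform c (fun x =>
          (ρ₀ : ℂ) * Complex.exp (Complex.I * (ω₀ : ℂ) * ((x 0 - t : ℝ) : ℂ))) φ < 0 := by
      intro p
      obtain ⟨χ, hχ, hsub, hcmp⟩ := hcut p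
      obtain ⟨φ, h1, h2, h3⟩ := exists_negative_function (t := t) hrel (κ := κ) (α := α) hχ
        ((isCompact_closedBall p r).of_isClosed_subset (isClosed_tsupport _) hsub)
        (by rwa [div_mul_eq_mul_div, lt_div_iff₀ hα, mul_comm] at hcmp)
      exact ⟨φ, h1, h2.trans hsub, h3⟩
    choose Φ hΦ hsub hneg using hex
    -- centres on the first axis at mutual distance at least `3r`
    let p : Fin m → Ed d := fun j => EuclideanSpace.single 0 (3 * r * (j : ℝ))
    refine exists_negative_space c (by fun_prop) (fun j => Φ (p j)) (fun j => hΦ _)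
      (fun j => (isCompact_closedBall (p j) r).of_isClosed_subset (isClosed_tsupport _) (hsub _))
      ?_ (fun j => hneg _)
    intro i j hij
    refine Disjoint.mono (hsub _) (hsub _) (closedBall_disjoint_closedBall ?_)
    have h1 : (1 : ℝ) ≤ |(i : ℝ) - (j : ℝ)| := by
      have : (1 : ℤ) ≤ |(i : ℤ) - (j : ℤ)| := Int.one_le_abs (by
        rw [sub_ne_zero]; exact_mod_cast fun h => hij (Fin.ext h))
      exact_mod_cast this
    rw [PiLp.dist_single_same 2 (fun _ : Fin d => ℝ), Real.dist_eq, ← mul_sub, abs_mul,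
      abs_of_pos (by positivity : 0 < 3 * r)]
    nlinarith
end
end
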